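/- arXiv:1207.2895 — 15 statements merged into one kernel-verified Lean document; each statement's English description precedes it below -/
import Mathlib

section
/- Let α ∈ ℂ with α ≠ 0, and let v : ℤ × ℤ → ℂ be a solution of the linear equation L_α with v(n,m) ≠ 0 for all n,m ∈ ℤ. Then the function u : ℤ × ℤ → ℂ defined by the discrete Hopf–Cole transform u(n,m) = v(n+1,m)/v(n,m) is a solution of the discrete Burgers-type equation B_α. -/
/-- `v` is a solution of the linear equation `L_α`:
`v(n+1,m+1) + v(n,m+1) = α^n (v(n+1,m) − v(n,m))` for all integers `n, m`. -/
def LinSol (α : ℂ) (v : ℤ → ℤ → ℂ) : Prop :=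
  ∀ n m : ℤ, v (n + 1) (m + 1) + v n (m + 1) = α ^ n * (v (n + 1) m - v n m)

/-- `u` is a solution of the discrete Burgers-type equation `B_α`:
`(u(n+1,m+1)+1)(u(n,m)−1)u(n,m+1) = α (u(n,m+1)+1)(u(n+1,m)−1)u(n,m)`. -/
def BurSol (α : ℂ) (u : ℤ → ℤ → ℂ) : Prop :=
  ∀ n m : ℤ, (u (n + 1) (m + 1) + 1) * (u n m - 1) * u n (m + 1)
    = α * (u n (m + 1) + 1) * (u (n + 1) m - 1) * u n m

/-- The discrete Hopf–Cole transform `u(n,m) = v(n+1,m)/v(n,m)` maps nowhere-vanishing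
solutions of the linear equation `L_α` to solutions of the Burgers-type equation `B_α`. -/
theorem hopf_cole_maps_linear_to_burgers (α : ℂ) (hα : α ≠ 0)
    (v : ℤ → ℤ → ℂ) (hv : LinSol α v) (hv0 : ∀ n m : ℤ, v n m ≠ 0) :
    BurSol α (fun n m => v (n + 1) m / v n m) := by
  intro n m
  have h₀ := hv n m
  have h₁ := hv (n + 1) m
  rw [zpow_add_one₀ hα] at h₁
  have ha := hv0 n m
  have hb := hv0 (n + 1) m
  have hA := hv0 n (m + 1)
  have hB := hv0 (n + 1) (m + 1)
  have key : (v (n + 1 + 1) (m + 1) + v (n + 1) (m + 1)) * (v (n + 1) m - v n m)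
      = α * (v (n + 1) (m + 1) + v n (m + 1)) * (v (n + 1 + 1) m - v (n + 1) m) := by
    rw [h₀, h₁]
    ring
  calc (v (n + 1 + 1) (m + 1) / v (n + 1) (m + 1) + 1) * (v (n + 1) m / v n m - 1)
        * (v (n + 1) (m + 1) / v n (m + 1))
      = (v (n + 1 + 1) (m + 1) + v (n + 1) (m + 1)) * (v (n + 1) m - v n m)
        / (v n m * v n (m + 1)) := by field_simp
    _ = α * (v (n + 1) (m + 1) + v n (m + 1)) * (v (n + 1 + 1) m - v (n + 1) m)
        / (v n m * v n (m + 1)) := by rw [key]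
    _ = α * (v (n + 1) (m + 1) / v n (m + 1) + 1) * (v (n + 1 + 1) m / v (n + 1) m - 1)
        * (v (n + 1) m / v n m) := by field_simp
end

section
/- Let α ∈ ℂ with α ≠ 0, let k ≥ 1, and let W : ℤ × ℤ → ((Fin (k+1) → ℂ) → ℂ) be a family of functions such that for every solution u of B_α with u(n,m) ≠ 0 for all n,m one has W(n,m+1)(u(n,m+1), u(n+1,m+1), …, u(n+k,m+1)) = W(n,m)(u(n,m), u(n+1,m), …, u(n+k,m)) for all n,m ∈ ℤ. Then for every solution v of L_α with v(n,m) ≠ 0 for all n,m, the function Ŵ(n,m) := W(n,m)(v(n+1,m)/v(n,m), v(n+2,m)/v(n+1,m), …, v(n+k+1,m)/v(n+k,m)) satisfies Ŵ(n,m+1) = Ŵ(n,m) for all n,m ∈ ℤ; that is, the n-direction first-integral invariance of B_α transfers through the Hopf–Cole transform to an invariant of L_α depending on v(n,m), …, v(n+k+1,m). -/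
/-- The Hopf–Cole transform maps nowhere-vanishing solutions of `L_α` to solutions of `B_α`. -/
theorem LinSol.burSol_hopfCole {α : ℂ} (hα : α ≠ 0) {v : ℤ → ℤ → ℂ} (hv : LinSol α v)
    (hv0 : ∀ n m : ℤ, v n m ≠ 0) : BurSol α (fun n m => v (n + 1) m / v n m) := by
  intro n m
  have h₀ := hv n m
  have h₁ := hv (n + 1) m
  rw [zpow_add_one₀ hα] at h₁
  have ha := hv0 n m
  have hb := hv0 (n + 1) m
  have hA := hv0 n (m + 1)
  have hB := hv0 (n + 1) (m + 1)
  field_simp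
  linear_combination (v (n + 1) m - v n m) * h₁
    - α * (v (n + 1 + 1) m - v (n + 1) m) * h₀

/-- The `n`-direction first-integral invariance of `B_α` transfers, through the
Hopf–Cole transform `u(n,m) = v(n+1,m)/v(n,m)`, to an invariant of `L_α` depending
on `v(n,m), …, v(n+k+1,m)`. -/
theorem first_integral_transfer_n_direction (α : ℂ) (hα : α ≠ 0) (k : ℕ) (hk : 1 ≤ k)
    (W : ℤ → ℤ → (Fin (k + 1) → ℂ) → ℂ)
    (hW : ∀ u : ℤ → ℤ → ℂ, BurSol α u → (∀ n m : ℤ, u n m ≠ 0) → ∀ n m : ℤ,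
      W n (m + 1) (fun i => u (n + ((i : ℕ) : ℤ)) (m + 1))
        = W n m (fun i => u (n + ((i : ℕ) : ℤ)) m))
    (v : ℤ → ℤ → ℂ) (hv : LinSol α v) (hv0 : ∀ n m : ℤ, v n m ≠ 0) :
    ∀ n m : ℤ,
      W n (m + 1) (fun i => v (n + ((i : ℕ) : ℤ) + 1) (m + 1) / v (n + ((i : ℕ) : ℤ)) (m + 1))
        = W n m (fun i => v (n + ((i : ℕ) : ℤ) + 1) m / v (n + ((i : ℕ) : ℤ)) m) := by
  exact hW _ (hv.burSol_hopfCole hα hv0) fun n m => div_ne_zero (hv0 _ _) (hv0 _ _)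
end

section
/- Let α ∈ ℂ with α ≠ 0, let k ≥ 1, and let a : Fin (k+1) → ℤ → ℤ → ℂ be coefficients such that for every solution v of L_α the linear expression Ŵ(n,m) := Σ_{j=0}^{k} a(j)(n,m)·v(n+j,m) satisfies Ŵ(n,m+1) = Ŵ(n,m) for all n,m ∈ ℤ. Let v be a solution of L_α with v(n,m) ≠ 0 and Ŵ(n,m) ≠ 0 for all n,m, and set u(n,m) := v(n+1,m)/v(n,m). Then for all n,m ∈ ℤ the quantity W(n,m) := (Σ_{j=0}^{k} a(j)(n+1,m)·∏_{i=0}^{j} u(n+i,m)) / (Σ_{j=0}^{k} a(j)(n,m)·∏_{i=0}^{j−1} u(n+i,m)) (where the empty product for j = 0 in the denominator equals 1) satisfies both W(n,m) = Ŵ(n+1,m)/Ŵ(n,m) and W(n,m+1) = W(n,m). -/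
/-- The linear combination `Ŵ(n,m) = Σ_{j=0}^{k} a(j)(n,m)·v(n+j,m)`. -/
noncomputable def WhatN (k : ℕ) (a : Fin (k + 1) → ℤ → ℤ → ℂ) (v : ℤ → ℤ → ℂ)
    (n m : ℤ) : ℂ :=
  ∑ j : Fin (k + 1), a j n m * v (n + ((j : ℕ) : ℤ)) m

/-- The ratio
`W(n,m) = (Σ_j a(j)(n+1,m)·∏_{i=0}^{j} u(n+i,m)) / (Σ_j a(j)(n,m)·∏_{i=0}^{j−1} u(n+i,m))`
(the empty product for `j = 0` in the denominator equals `1`). -/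
noncomputable def WratioN (k : ℕ) (a : Fin (k + 1) → ℤ → ℤ → ℂ) (u : ℤ → ℤ → ℂ)
    (n m : ℤ) : ℂ :=
  (∑ j : Fin (k + 1), a j (n + 1) m * ∏ i ∈ Finset.range ((j : ℕ) + 1), u (n + (i : ℤ)) m)
    / (∑ j : Fin (k + 1), a j n m * ∏ i ∈ Finset.range (j : ℕ), u (n + (i : ℤ)) m)

/-- Telescoping product of consecutive ratios of a nowhere vanishing function. -/
theorem prod_range_shift_div {v : ℤ → ℤ → ℂ} (hv0 : ∀ n m : ℤ, v n m ≠ 0) (n m : ℤ) (j : ℕ) :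
    ∏ i ∈ Finset.range j, v (n + (i : ℤ) + 1) m / v (n + (i : ℤ)) m
      = v (n + (j : ℤ)) m / v n m := by
  induction j with
  | zero => simp [hv0]
  | succ j ih =>
    rw [Finset.prod_range_succ, ih, mul_comm, div_mul_div_cancel₀ (hv0 _ _), Nat.cast_succ,
      add_assoc]

theorem WratioN_eq_WhatN_div (k : ℕ) (a : Fin (k + 1) → ℤ → ℤ → ℂ) {v : ℤ → ℤ → ℂ}
    (hv0 : ∀ n m : ℤ, v n m ≠ 0) (n m : ℤ) :
    WratioN k a (fun n m => v (n + 1) m / v n m) n m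
      = WhatN k a v (n + 1) m / WhatN k a v n m := by
  simp only [WratioN, WhatN, prod_range_shift_div hv0, mul_div_assoc', ← Finset.sum_div]
  rw [div_div_div_cancel_right₀ (hv0 n m)]
  simp only [Nat.cast_add, Nat.cast_one, add_assoc, add_comm (1 : ℤ)]

/-- A linear `n`-direction first integral `Ŵ` of `L_α` of order `k` descends, through the
Hopf–Cole transform `u(n,m) = v(n+1,m)/v(n,m)`, to a first integral
`W(n,m) = Ŵ(n+1,m)/Ŵ(n,m)` of the Burgers-type equation, expressible in terms of `u`. -/
theorem linear_first_integral_descends_n (α : ℂ) (hα : α ≠ 0) (k : ℕ) (hk : 1 ≤ k)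
    (a : Fin (k + 1) → ℤ → ℤ → ℂ)
    (ha : ∀ v : ℤ → ℤ → ℂ, LinSol α v → ∀ n m : ℤ,
      WhatN k a v n (m + 1) = WhatN k a v n m)
    (v : ℤ → ℤ → ℂ) (hv : LinSol α v)
    (hv0 : ∀ n m : ℤ, v n m ≠ 0) (hW0 : ∀ n m : ℤ, WhatN k a v n m ≠ 0) :
    ∀ n m : ℤ,
      WratioN k a (fun n m => v (n + 1) m / v n m) n m
          = WhatN k a v (n + 1) m / WhatN k a v n m
        ∧ WratioN k a (fun n m => v (n + 1) m / v n m) n (m + 1)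
          = WratioN k a (fun n m => v (n + 1) m / v n m) n m := by
  intro n m
  refine ⟨WratioN_eq_WhatN_div k a hv0 n m, ?_⟩
  rw [WratioN_eq_WhatN_div k a hv0, WratioN_eq_WhatN_div k a hv0, ha v hv, ha v hv]
end

section
/- Let α ∈ ℂ with α ≠ 0, let l ≥ 1, and let b : Fin (l+1) → ℤ → ℤ → ℂ be coefficients such that for every solution v of L_α the linear expression Ŵ(n,m) := Σ_{j=0}^{l} b(j)(n,m)·v(n,m+j) satisfies Ŵ(n+1,m) = Ŵ(n,m) for all n,m ∈ ℤ. Let v be a solution of L_α with v(n,m) ≠ 0 and Ŵ(n,m) ≠ 0 for all n,m, set u(n,m) := v(n+1,m)/v(n,m), assume u(n,m) ≠ 1 for all n,m, and define Z(n,m) := α^n·(u(n,m) − 1)/(u(n,m+1) + 1). Then for all n,m ∈ ℤ the quantity W(n,m) := (Σ_{j=0}^{l} b(j)(n,m+1)·∏_{i=0}^{j} Z(n,m+i)) / (Σ_{j=0}^{l} b(j)(n,m)·∏_{i=0}^{j−1} Z(n,m+i)) (where the empty product for j = 0 in the denominator equals 1) satisfies both W(n,m) = Ŵ(n,m+1)/Ŵ(n,m)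 and W(n+1,m) = W(n,m). -/
/-- The linear combination `Ŵ(n,m) = Σ_{j=0}^{l} b(j)(n,m)·v(n,m+j)`. -/
noncomputable def WhatM (l : ℕ) (b : Fin (l + 1) → ℤ → ℤ → ℂ) (v : ℤ → ℤ → ℂ)
    (n m : ℤ) : ℂ :=
  ∑ j : Fin (l + 1), b j n m * v n (m + ((j : ℕ) : ℤ))

/-- `Z(n,m) = α^n (u(n,m) − 1)/(u(n,m+1) + 1)` where `u(n,m) = v(n+1,m)/v(n,m)`. -/
noncomputable def Zfun (α : ℂ) (v : ℤ → ℤ → ℂ) (n m : ℤ) : ℂ :=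
  α ^ n * (v (n + 1) m / v n m - 1) / (v (n + 1) (m + 1) / v n (m + 1) + 1)

/-- The ratio
`W(n,m) = (Σ_j b(j)(n,m+1)·∏_{i=0}^{j} Z(n,m+i)) / (Σ_j b(j)(n,m)·∏_{i=0}^{j−1} Z(n,m+i))`
(the empty product for `j = 0` in the denominator equals `1`). -/
noncomputable def WratioM (l : ℕ) (b : Fin (l + 1) → ℤ → ℤ → ℂ) (Z : ℤ → ℤ → ℂ)
    (n m : ℤ) : ℂ :=
  (∑ j : Fin (l + 1), b j n (m + 1) * ∏ i ∈ Finset.range ((j : ℕ) + 1), Z n (m + (i : ℤ)))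
    / (∑ j : Fin (l + 1), b j n m * ∏ i ∈ Finset.range (j : ℕ), Z n (m + (i : ℤ)))

/-- On a solution of `L_α`, `Z` is the ratio of consecutive values in the `m` direction. -/
theorem LinSol.zfun_eq_div {α : ℂ} {v : ℤ → ℤ → ℂ} (hv : LinSol α v) (hα : α ≠ 0)
    (hv0 : ∀ n m : ℤ, v n m ≠ 0) (h1 : ∀ n m : ℤ, v (n + 1) m / v n m ≠ 1) (n m : ℤ) :
    Zfun α v n m = v n (m + 1) / v n m := by
  have ha : v n m ≠ 0 := hv0 n m
  have hc : v n (m + 1) ≠ 0 := hv0 n (m + 1)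
  have hd : v (n + 1) m - v n m ≠ 0 := fun h =>
    h1 n m ((div_eq_one_iff_eq ha).2 (sub_eq_zero.1 h))
  have hp : α ^ n ≠ 0 := zpow_ne_zero n hα
  have hden : v (n + 1) (m + 1) / v n (m + 1) + 1
      = α ^ n * (v (n + 1) m - v n m) / v n (m + 1) := by
    rw [← hv n m, add_div, div_self hc]
  rw [Zfun, hden, div_sub_one ha]
  field_simp

/-- The telescoping product of `Z` along the `m` direction. -/
theorem LinSol.prod_zfun {α : ℂ} {v : ℤ → ℤ → ℂ} (hv : LinSol α v) (hα : α ≠ 0)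
    (hv0 : ∀ n m : ℤ, v n m ≠ 0) (h1 : ∀ n m : ℤ, v (n + 1) m / v n m ≠ 1)
    (n m : ℤ) (k : ℕ) :
    ∏ i ∈ Finset.range k, Zfun α v n (m + (i : ℤ)) = v n (m + (k : ℤ)) / v n m := by
  induction k with
  | zero => simp [hv0 n m]
  | succ k ih =>
    rw [Finset.prod_range_succ, ih, hv.zfun_eq_div hα hv0 h1, mul_comm,
      div_mul_div_cancel₀ (hv0 n (m + k)), Nat.cast_succ, add_assoc]

theorem LinSol.wratioM_eq {α : ℂ} {v : ℤ → ℤ → ℂ} (hv : LinSol α v) (hα : α ≠ 0)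
    (hv0 : ∀ n m : ℤ, v n m ≠ 0) (h1 : ∀ n m : ℤ, v (n + 1) m / v n m ≠ 1)
    (l : ℕ) (b : Fin (l + 1) → ℤ → ℤ → ℂ) (n m : ℤ) :
    WratioM l b (Zfun α v) n m = WhatM l b v n (m + 1) / WhatM l b v n m := by
  have hshift (k : ℕ) : m + ((k + 1 : ℕ) : ℤ) = m + 1 + (k : ℤ) := by
    push_cast
    ring
  simp only [WratioM, WhatM, hv.prod_zfun hα hv0 h1, hshift, ← mul_div_assoc,
    ← Finset.sum_div]
  exact div_div_div_cancel_right₀ (hv0 n m) _ _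

/-- A linear `m`-direction first integral `Ŵ` of `L_α` of order `l` descends, through the
Hopf–Cole transform, to a first integral `W(n,m) = Ŵ(n,m+1)/Ŵ(n,m)` of the
Burgers-type equation, expressible in terms of `Z`. -/
theorem linear_first_integral_descends_m (α : ℂ) (hα : α ≠ 0) (l : ℕ) (hl : 1 ≤ l)
    (b : Fin (l + 1) → ℤ → ℤ → ℂ)
    (hb : ∀ v : ℤ → ℤ → ℂ, LinSol α v → ∀ n m : ℤ,
      WhatM l b v (n + 1) m = WhatM l b v n m)
    (v : ℤ → ℤ → ℂ) (hv : LinSol α v)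
    (hv0 : ∀ n m : ℤ, v n m ≠ 0) (hW0 : ∀ n m : ℤ, WhatM l b v n m ≠ 0)
    (h1 : ∀ n m : ℤ, v (n + 1) m / v n m ≠ 1) :
    ∀ n m : ℤ,
      WratioM l b (Zfun α v) n m = WhatM l b v n (m + 1) / WhatM l b v n m
      ∧ WratioM l b (Zfun α v) (n + 1) m = WratioM l b (Zfun α v) n m := by
  intro n m
  have hratio := hv.wratioM_eq hα hv0 h1 l b
  refine ⟨hratio n m, ?_⟩
  rw [hratio, hratio, hb v hv, hb v hv]
end

section
/- Let α ∈ ℂ with α ≠ 0 and let v be a solution of the linear equation L_α. Define the first-direction Laplace transforms v_j : ℤ × ℤ → ℂ by v_0 = v and v_j(n,m) = v_{j−1}(n+1,m) + α^{j−1}·v_{j−1}(n,m) for j ≥ 1. Then for every j ≥ 0 and all n,m ∈ ℤ: v_j(n+1,m+1) + α^j·v_j(n,m+1) = α^{n+j}·(v_j(n+1,m) − v_j(n,m)); equivalently, v_j satisfies (T₂ − α^{n+j})(T₁ + α^j)v_j + α^{n+j}(1 + α^j)·v_j = 0, where T₁, T₂ are the unit shifts in n and m. -/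
/-- The first-direction discrete Laplace transforms:
`v_0 = v` and `v_j(n,m) = v_{j−1}(n+1,m) + α^{j−1}·v_{j−1}(n,m)` for `j ≥ 1`. -/
noncomputable def lap1 (α : ℂ) (v : ℤ → ℤ → ℂ) : ℕ → ℤ → ℤ → ℂ
  | 0 => v
  | j + 1 => fun n m => lap1 α v j (n + 1) m + α ^ j * lap1 α v j n m

/-- Each first-direction Laplace transform `v_j` of a solution of `L_α` satisfies
`v_j(n+1,m+1) + α^j·v_j(n,m+1) = α^{n+j}·(v_j(n+1,m) − v_j(n,m))`, i.e.
`(T₂ − α^{n+j})(T₁ + α^j)v_j + α^{n+j}(1 + α^j)·v_j = 0`. -/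
theorem laplace_transform_n_equation (α : ℂ) (hα : α ≠ 0)
    (v : ℤ → ℤ → ℂ) (hv : LinSol α v) :
    ∀ (j : ℕ) (n m : ℤ),
      lap1 α v j (n + 1) (m + 1) + α ^ j * lap1 α v j n (m + 1)
        = α ^ (n + (j : ℤ)) * (lap1 α v j (n + 1) m - lap1 α v j n m) := by
  intro j
  induction j with
  | zero => simpa [lap1, LinSol] using hv
  | succ j ih =>
    intro n m
    have step : α ^ (n + 1 + (j : ℤ)) = α ^ (n + (j : ℤ)) * α := by
      rw [add_right_comm, zpow_add_one₀ hα]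
    have h₁ := ih (n + 1) m
    rw [step] at h₁
    simp only [lap1]
    rw [Nat.cast_succ, ← add_assoc, zpow_add_one₀ hα, pow_succ]
    linear_combination h₁ + α ^ j * α * ih n m
end

section
/- Let α ∈ ℂ with α ≠ 0 and let v be a solution of the linear equation L_α. Define the second-direction Laplace transforms v̌_j : ℤ × ℤ → ℂ by v̌_0 = v and v̌_j(n,m) = v̌_{j−1}(n,m+1) − α^{n−j}·v̌_{j−1}(n,m) for j ≥ 1. Then for every j ≥ 0 and all n,m ∈ ℤ: v̌_j(n+1,m+1) + v̌_j(n,m+1) = α^{n−j}·v̌_j(n+1,m) − α^n·v̌_j(n,m); equivalently, v̌_j satisfies (T₁ + 1)(T₂ − α^{n−j−1})v̌_j + α^{n−j−1}(1 + α^{j+1})·v̌_j = 0, where T₁, T₂ are the unit shifts in n and m. -/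
/-- The second-direction discrete Laplace transforms:
`v̌_0 = v` and `v̌_j(n,m) = v̌_{j−1}(n,m+1) − α^{n−j}·v̌_{j−1}(n,m)` for `j ≥ 1`. -/
noncomputable def lap2 (α : ℂ) (v : ℤ → ℤ → ℂ) : ℕ → ℤ → ℤ → ℂ
  | 0 => v
  | j + 1 => fun n m => lap2 α v j n (m + 1) - α ^ (n - ((j : ℤ) + 1)) * lap2 α v j n m

/-- Each second-direction Laplace transform `v̌_j` of a solution of `L_α` satisfies
`v̌_j(n+1,m+1) + v̌_j(n,m+1) = α^{n−j}·v̌_j(n+1,m) − α^n·v̌_j(n,m)`, i.e.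
`(T₁ + 1)(T₂ − α^{n−j−1})v̌_j + α^{n−j−1}(1 + α^{j+1})·v̌_j = 0`. -/
theorem laplace_transform_m_equation (α : ℂ) (hα : α ≠ 0)
    (v : ℤ → ℤ → ℂ) (hv : LinSol α v) :
    ∀ (j : ℕ) (n m : ℤ),
      lap2 α v j (n + 1) (m + 1) + lap2 α v j n (m + 1)
        = α ^ (n - (j : ℤ)) * lap2 α v j (n + 1) m - α ^ n * lap2 α v j n m := by
  intro j
  induction j with
  | zero =>
    intro n m
    simpa [lap2, mul_sub] using hv n m
  | succ j ih =>
    intro n m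
    have shift_exponent : n + 1 - ((j : ℤ) + 1) = n - j := by ring
    simp only [lap2, Nat.cast_add, Nat.cast_one, shift_exponent]
    linear_combination ih n (m + 1) - α ^ (n - ((j : ℤ) + 1)) * ih n m
end

section
/- Let α ∈ ℂ with α ≠ 0 and let k̂ ≥ 1. Suppose the linear equation L_α possesses a first integral of order k̂ in the n-direction. Then there exists k̃ with 0 ≤ k̃ < k̂ such that K(n,k̃) = 0 for all n ∈ ℤ, where K(n,0) := 2·α^n and K(n,j) := α^{n+j}·(1 + α^j) for j ≥ 1. Equivalently (since α ≠ 0), there exists j with 1 ≤ j < k̂ and α^j = −1. -/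
/-- `W` is a first integral of order `k` in the `n`-direction of the equation `E`:
(i) each `W n m` is differentiable at every point with all coordinates nonzero;
(ii) `W` is invariant under the `m`-shift on nowhere-vanishing solutions of `E`;
(iii) `W` genuinely depends on its 0-th and `k`-th arguments (nonzero partial
derivatives at some point with nonzero coordinates, for some `n, m`). -/
def IsFirstIntegralN (E : (ℤ → ℤ → ℂ) → Prop) (k : ℕ)
    (W : ℤ → ℤ → (Fin (k + 1) → ℂ) → ℂ) : Prop :=
  (∀ (n m : ℤ) (x : Fin (k + 1) → ℂ), (∀ i, x i ≠ 0) → DifferentiableAt ℂ (W n m) x)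
  ∧ (∀ w : ℤ → ℤ → ℂ, E w → (∀ n m : ℤ, w n m ≠ 0) → ∀ n m : ℤ,
      W n (m + 1) (fun i => w (n + ((i : ℕ) : ℤ)) (m + 1))
        = W n m (fun i => w (n + ((i : ℕ) : ℤ)) m))
  ∧ (∃ (n m : ℤ) (x : Fin (k + 1) → ℂ), (∀ i, x i ≠ 0)
      ∧ fderiv ℂ (W n m) x (Pi.single 0 1) ≠ 0)
  ∧ (∃ (n m : ℤ) (x : Fin (k + 1) → ℂ), (∀ i, x i ≠ 0)
      ∧ fderiv ℂ (W n m) x (Pi.single (Fin.last k) 1) ≠ 0)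

/-- `W` is a first integral of order `l` in the `m`-direction of the equation `E`. -/
def IsFirstIntegralM (E : (ℤ → ℤ → ℂ) → Prop) (l : ℕ)
    (W : ℤ → ℤ → (Fin (l + 1) → ℂ) → ℂ) : Prop :=
  (∀ (n m : ℤ) (x : Fin (l + 1) → ℂ), (∀ i, x i ≠ 0) → DifferentiableAt ℂ (W n m) x)
  ∧ (∀ w : ℤ → ℤ → ℂ, E w → (∀ n m : ℤ, w n m ≠ 0) → ∀ n m : ℤ,
      W (n + 1) m (fun i => w (n + 1) (m + ((i : ℕ) : ℤ)))
        = W n m (fun i => w n (m + ((i : ℕ) : ℤ))))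
  ∧ (∃ (n m : ℤ) (x : Fin (l + 1) → ℂ), (∀ i, x i ≠ 0)
      ∧ fderiv ℂ (W n m) x (Pi.single 0 1) ≠ 0)
  ∧ (∃ (n m : ℤ) (x : Fin (l + 1) → ℂ), (∀ i, x i ≠ 0)
      ∧ fderiv ℂ (W n m) x (Pi.single (Fin.last l) 1) ≠ 0)

/-- `K(n,0) = 2·α^n`, `K(n,j) = α^{n+j}·(1 + α^j)` for `j ≥ 1`. -/
noncomputable def Kfun (α : ℂ) (n : ℤ) (j : ℕ) : ℂ :=
  if j = 0 then 2 * α ^ n else α ^ (n + (j : ℤ)) * (1 + α ^ j)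

/-- A relation that can always be continued to the right produces an infinite sequence. -/
lemma exists_forward_seq {σ : Type*} (P : σ → Prop) (R : ℕ → σ → σ → Prop)
    (fwd : ∀ i a, P a → ∃ b, P b ∧ R i a b) (a : σ) (ha : P a) :
    ∃ u : ℕ → σ, u 0 = a ∧ (∀ i, P (u i)) ∧ ∀ i, R i (u i) (u (i + 1)) := by
  choose F hP hR using fwd
  let v : ℕ → {x // P x} := fun j =>
    Nat.rec ⟨a, ha⟩ (fun i x => ⟨F i x.1 x.2, hP i x.1 x.2⟩) j
  exact ⟨fun j => (v j).1, rfl, fun i => (v i).2, fun i => hR i (v i).1 (v i).2⟩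

/-- A chain prescribed on the integer interval `[a, b]` extends to all of `ℤ` if the relation can
always be continued in both directions. -/
lemma exists_int_chain {σ : Type*} (P : σ → Prop) (R : ℤ → σ → σ → Prop)
    (fwd : ∀ i a, P a → ∃ b, P b ∧ R i a b) (bwd : ∀ i b, P b → ∃ a, P a ∧ R i a b)
    (s : ℤ → σ) (a b : ℤ) (hab : a ≤ b) (hP : ∀ i, a ≤ i → i ≤ b → P (s i))
    (hR : ∀ i, a ≤ i → i < b → R i (s i) (s (i + 1))) :
    ∃ f : ℤ → σ, (∀ i, a ≤ i → i ≤ b → f i = s i) ∧ (∀ i, P (f i)) ∧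
      ∀ i, R i (f i) (f (i + 1)) := by
  obtain ⟨u, hu0, huP, huR⟩ := exists_forward_seq P (fun j x y => R (b + j) x y)
    (fun j x hx => fwd _ x hx) (s b) (hP b hab le_rfl)
  obtain ⟨d, hd0, hdP, hdR⟩ := exists_forward_seq P (fun j x y => R (a - j - 1) y x)
    (fun j x hx => bwd _ x hx) (s a) (hP a le_rfl hab)
  refine ⟨fun i => if i < a then d (a - i).toNat else if i ≤ b then s i else u (i - b).toNat,
    fun i h₁ h₂ => ?_, fun i => ?_, fun i => ?_⟩
  · simp [not_lt.mpr h₁, h₂]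
  · dsimp only
    split_ifs with h₁ h₂
    · exact hdP _
    · exact hP i (not_lt.mp h₁) h₂
    · exact huP _
  · dsimp only
    rcases lt_or_ge i a with h₁ | h₁
    · have h := hdR (a - i - 1).toNat
      have e₁ : (a - i - 1).toNat + 1 = (a - i).toNat := by omega
      have e₂ : a - ((a - i - 1).toNat : ℤ) - 1 = i := by omega
      rw [e₁, e₂] at h
      rw [if_pos h₁]
      by_cases h₂ : i + 1 < a
      · rw [if_pos h₂]
        have e₃ : (a - (i + 1)).toNat = (a - i - 1).toNat := by omega
        rwa [e₃]
      · rw [if_neg h₂, if_pos (by omega)]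
        have e₃ : (a - i - 1).toNat = 0 := by omega
        have e₄ : i + 1 = a := by omega
        rw [e₃, hd0] at h
        rwa [e₄]
    · rw [if_neg (not_lt.mpr h₁), if_neg (by omega : ¬ i + 1 < a)]
      rcases lt_or_ge i b with h₂ | h₂
      · rw [if_pos h₂.le, if_pos (by omega)]
        exact hR i h₁ h₂
      · have h := huR (i - b).toNat
        have e₁ : (i - b).toNat + 1 = (i + 1 - b).toNat := by omega
        have e₂ : b + ((i - b).toNat : ℤ) = i := by omega
        rw [e₁, e₂] at h
        rw [if_neg (by omega : ¬ i + 1 ≤ b)]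
        by_cases h₃ : i ≤ b
        · rw [if_pos h₃]
          have e₃ : (i - b).toNat = 0 := by omega
          have e₄ : i = b := by omega
          rw [e₃, hu0] at h
          rwa [← e₄] at h ⊢
        · rwa [if_neg h₃]

/-- A first order linear recurrence over `ℤ` has a nowhere vanishing solution. -/
lemma exists_ne_zero_recurrence (ε : ℂ) (hε : ε ≠ 0) (g : ℤ → ℂ) :
    ∃ s : ℤ → ℂ, (∀ i, s i ≠ 0) ∧ ∀ i, s (i + 1) = ε * s i + g i := by
  obtain ⟨p, -, -, hp⟩ := exists_int_chain (fun _ : ℂ => True)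
    (fun i x y => y = ε * x + g i) (fun i x _ => ⟨_, trivial, rfl⟩)
    (fun i y _ => ⟨(y - g i) / ε, trivial, by field_simp; ring⟩) (fun _ => 0) 0 0 le_rfl
    (fun _ _ _ => trivial) (fun i h₁ h₂ => by omega)
  obtain ⟨c, hc⟩ : ∃ c : ℂ, c ∉ Set.range (fun i : ℤ => -p i / ε ^ i) := by
    by_contra! h
    exact not_countable_complex
      ((Set.countable_range (fun i : ℤ => -p i / ε ^ i)).mono fun c _ => h c)
  refine ⟨fun i => p i + ε ^ i * c, fun i hi => hc ⟨i, ?_⟩, fun i => ?_⟩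
  · have : ε ^ i ≠ 0 := zpow_ne_zero _ hε
    field_simp
    linear_combination -hi
  · dsimp only
    rw [hp i, zpow_add_one₀ hε]
    ring

lemma exists_ne_zero_next_row (α : ℂ) (r : ℤ → ℂ) :
    ∃ s : ℤ → ℂ, (∀ i, s i ≠ 0) ∧ ∀ i, s (i + 1) + s i = α ^ i * (r (i + 1) - r i) := by
  obtain ⟨s, h₁, h₂⟩ := exists_ne_zero_recurrence (-1) (by norm_num)
    (fun i => α ^ i * (r (i + 1) - r i))
  exact ⟨s, h₁, fun i => by rw [h₂ i]; ring⟩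

lemma exists_ne_zero_prev_row (α : ℂ) (hα : α ≠ 0) (s : ℤ → ℂ) :
    ∃ r : ℤ → ℂ, (∀ i, r i ≠ 0) ∧ ∀ i, s (i + 1) + s i = α ^ i * (r (i + 1) - r i) := by
  obtain ⟨r, h₁, h₂⟩ := exists_ne_zero_recurrence 1 one_ne_zero
    (fun i => (s (i + 1) + s i) / α ^ i)
  refine ⟨r, h₁, fun i => ?_⟩
  have : α ^ i ≠ 0 := zpow_ne_zero _ hα
  rw [h₂ i]
  field_simp
  ring

lemma exists_ne_zero_and_ne (c : ℂ) : ∃ z : ℂ, z ≠ 0 ∧ z ≠ c := by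
  by_cases h : c = 1
  · exact ⟨2, by norm_num, by rw [h]; norm_num⟩
  · exact ⟨1, one_ne_zero, Ne.symm h⟩

/-- Nonvanishing data on two adjacent horizontal segments, compatible with `L_α`, extend to a
nowhere vanishing solution. -/
lemma exists_linSol_extension (α : ℂ) (hα : α ≠ 0) (n m : ℤ) (k : ℕ) (x y : ℤ → ℂ)
    (hx : ∀ i, n ≤ i → i ≤ n + k → x i ≠ 0) (hy : ∀ i, n ≤ i → i ≤ n + k → y i ≠ 0)
    (h : ∀ i, n ≤ i → i < n + k → y (i + 1) + y i = α ^ i * (x (i + 1) - x i)) :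
    ∃ w : ℤ → ℤ → ℂ, LinSol α w ∧ (∀ p q, w p q ≠ 0) ∧
      (∀ i, n ≤ i → i ≤ n + k → w i m = x i) ∧
      ∀ i, n ≤ i → i ≤ n + k → w i (m + 1) = y i := by
  obtain ⟨f, hf, hf0, hfR⟩ := exists_int_chain (fun a : ℂ × ℂ => a.1 ≠ 0 ∧ a.2 ≠ 0)
    (fun i a b => b.2 + a.2 = α ^ i * (b.1 - a.1))
    (fun i a _ => by
      have : α ^ i ≠ 0 := zpow_ne_zero _ hα
      obtain ⟨z, hz, hz'⟩ := exists_ne_zero_and_ne (a.1 + a.2 / α ^ i)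
      refine ⟨(z, α ^ i * (z - a.1) - a.2), ⟨hz, fun h0 => hz' ?_⟩, by ring⟩
      dsimp only at h0
      field_simp
      linear_combination h0)
    (fun i b _ => by
      have : α ^ i ≠ 0 := zpow_ne_zero _ hα
      obtain ⟨z, hz, hz'⟩ := exists_ne_zero_and_ne (b.1 - b.2 / α ^ i)
      refine ⟨(z, α ^ i * (b.1 - z) - b.2), ⟨hz, fun h0 => hz' ?_⟩, by ring⟩
      dsimp only at h0
      field_simp
      linear_combination -h0)
    (fun i => (x i, y i)) n (n + k) (by omega)
    (fun i h₁ h₂ => ⟨hx i h₁ h₂, hy i h₁ h₂⟩) h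
  obtain ⟨v, hv, hv0, hvR⟩ := exists_int_chain (fun r : ℤ → ℂ => ∀ i, r i ≠ 0)
    (fun _ r s => ∀ i, s (i + 1) + s i = α ^ i * (r (i + 1) - r i))
    (fun _ r _ => exists_ne_zero_next_row α r) (fun _ s _ => exists_ne_zero_prev_row α hα s)
    (fun q => if q = m then fun i => (f i).1 else fun i => (f i).2) m (m + 1) (by omega)
    (fun q _ _ i => by
      split_ifs
      · exact (hf0 i).1
      · exact (hf0 i).2)
    (fun q h₁ h₂ i => by
      obtain rfl : q = m := by omega
      simpa using hfR i)
  refine ⟨fun p q => v q p, fun p q => hvR q p, fun p q => hv0 q p, fun i h₁ h₂ => ?_,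
    fun i h₁ h₂ => ?_⟩
  · simp [hv m le_rfl (by omega), hf i h₁ h₂]
  · simp [hv (m + 1) (by omega) le_rfl, hf i h₁ h₂]

/-- Invariant directions are transported by the linearised equation from row `m` to row `m + 1`. -/
lemma IsFirstIntegralN.fderiv_next_row_eq_zero {α : ℂ} (hα : α ≠ 0) {k : ℕ}
    {W : ℤ → ℤ → (Fin (k + 1) → ℂ) → ℂ} (hW : IsFirstIntegralN (LinSol α) k W) {n m : ℤ}
    {ξ η : ℕ → ℂ} (hξη : ∀ i : ℕ, η (i + 1) + η i = α ^ (n + i) * (ξ (i + 1) - ξ i))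
    (hξ : ∀ x : Fin (k + 1) → ℂ, (∀ i, x i ≠ 0) →
      fderiv ℂ (W n m) x (fun i => ξ i) = 0)
    (y : Fin (k + 1) → ℂ) (hy : ∀ i, y i ≠ 0) :
    fderiv ℂ (W n (m + 1)) y (fun i => η i) = 0 := by
  obtain ⟨hdiff, hinv, -, -⟩ := hW
  let Y : ℤ → ℂ := fun p => y (Fin.ofNat (k + 1) (p - n).toNat)
  have hY : ∀ i : Fin (k + 1), Y (n + ((i : ℕ) : ℤ)) = y i := by
    intro i
    simp [Y]
  obtain ⟨X, hX0, hX⟩ := exists_ne_zero_prev_row α hα Y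
  let x : Fin (k + 1) → ℂ := fun i => X (n + ((i : ℕ) : ℤ))
  have hx : ∀ i, x i ≠ 0 := fun i => hX0 _
  let ξ' : Fin (k + 1) → ℂ := fun i => ξ i
  let η' : Fin (k + 1) → ℂ := fun i => η i
  have nonvanishing : ∀ z ζ : Fin (k + 1) → ℂ, (∀ i, z i ≠ 0) →
      ∀ᶠ t : ℂ in nhds 0, ∀ i, (z + t • ζ) i ≠ 0 := by
    intro z ζ hz
    rw [Filter.eventually_all]
    intro i
    have hc : ContinuousAt (fun t : ℂ => (z + t • ζ) i) 0 := by
      simp only [Pi.add_apply, Pi.smul_apply]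
      fun_prop
    exact hc.eventually_ne (by simpa using hz i)
  have heq : (fun t : ℂ => W n (m + 1) (y + t • η')) =ᶠ[nhds 0]
      fun t : ℂ => W n m (x + t • ξ') := by
    filter_upwards [nonvanishing x ξ' hx, nonvanishing y η' hy] with t htx hty
    have index : ∀ i, n ≤ i → i ≤ n + k → ∃ j : Fin (k + 1), i = n + ((j : ℕ) : ℤ) :=
      fun i h₁ h₂ => ⟨⟨(i - n).toNat, by omega⟩, by dsimp only; omega⟩
    obtain ⟨w, hw, hw0, hwx, hwy⟩ := exists_linSol_extension α hα n m k
      (fun p => X p + t * ξ (p - n).toNat) (fun p => Y p + t * η (p - n).toNat)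
      (fun i h₁ h₂ => by
        obtain ⟨j, rfl⟩ := index i h₁ h₂
        simpa [x, ξ'] using htx j)
      (fun i h₁ h₂ => by
        obtain ⟨j, rfl⟩ := index i h₁ h₂
        simpa [hY, η'] using hty j)
      (fun i h₁ h₂ => by
        have h := hξη (i - n).toNat
        have e₁ : n + ((i - n).toNat : ℤ) = i := by omega
        have e₂ : (i + 1 - n).toNat = (i - n).toNat + 1 := by omega
        rw [e₁] at h
        rw [e₂]
        linear_combination hX i + t * h)
    have h := hinv w hw hw0 n m
    have e₁ : (fun i : Fin (k + 1) => w (n + ((i : ℕ) : ℤ)) (m + 1)) = y + t • η' := by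
      funext i
      rw [hwy _ (by omega) (by omega)]
      simp [hY, η']
    have e₂ : (fun i : Fin (k + 1) => w (n + ((i : ℕ) : ℤ)) m) = x + t • ξ' := by
      funext i
      rw [hwx _ (by omega) (by omega)]
      simp [x, ξ']
    rwa [e₁, e₂] at h
  have hy' := (hdiff n (m + 1) y hy).hasFDerivAt.hasLineDerivAt η'
  have hx' := (hdiff n m x hx).hasFDerivAt.hasLineDerivAt ξ'
  have h := HasDerivAt.unique hy' (HasDerivAt.congr_of_eventuallyEq hx' heq)
  exact h.trans (hξ x hx)

/-- The Gaussian binomial coefficient `[i choose j]` at `q`. -/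
def gaussBinom (q : ℂ) : ℕ → ℕ → ℂ
  | _, 0 => 1
  | 0, _ + 1 => 0
  | i + 1, j + 1 => gaussBinom q i j + q ^ (j + 1) * gaussBinom q i (j + 1)

lemma gaussBinom_zero_right (q : ℂ) (i : ℕ) : gaussBinom q i 0 = 1 := by
  cases i <;> rfl

lemma gaussBinom_zero_succ (q : ℂ) (j : ℕ) : gaussBinom q 0 (j + 1) = 0 := rfl

lemma gaussBinom_succ_succ (q : ℂ) (i j : ℕ) : gaussBinom q (i + 1) (j + 1) =
    gaussBinom q i j + q ^ (j + 1) * gaussBinom q i (j + 1) := rfl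

lemma gaussBinom_eq_zero_of_lt (q : ℂ) {i j : ℕ} (h : i < j) : gaussBinom q i j = 0 := by
  induction i generalizing j with
  | zero =>
    obtain ⟨j, rfl⟩ := Nat.exists_eq_succ_of_ne_zero h.ne'
    rfl
  | succ i ih =>
    obtain ⟨j, rfl⟩ := Nat.exists_eq_succ_of_ne_zero (Nat.ne_zero_of_lt h)
    rw [Nat.succ_eq_add_one, gaussBinom_succ_succ, ih (by omega), ih (by omega)]
    ring

lemma gaussBinom_self (q : ℂ) (j : ℕ) : gaussBinom q j j = 1 := by
  induction j with
  | zero => rfl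
  | succ j ih =>
    rw [gaussBinom_succ_succ, ih, gaussBinom_eq_zero_of_lt q (Nat.lt_succ_self j)]
    ring

lemma pow_mul_gaussBinom (q : ℂ) (i j : ℕ) : q ^ i * gaussBinom q i j =
    q ^ j * (gaussBinom q i j + (q ^ (j + 1) - 1) * gaussBinom q i (j + 1)) := by
  induction i generalizing j with
  | zero =>
    cases j with
    | zero => simp [gaussBinom_zero_right, gaussBinom_zero_succ]
    | succ j => simp [gaussBinom_zero_succ]
  | succ i ih =>
    cases j with
    | zero =>
      have h := ih 0
      simp only [gaussBinom_zero_right, gaussBinom_succ_succ] at h ⊢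
      linear_combination q * h
    | succ j =>
      have h₁ := ih j
      have h₂ := ih (j + 1)
      simp only [gaussBinom_succ_succ]
      linear_combination q * h₁ + q * q ^ (j + 1) * h₂

/-- The direction with coordinates `(-1) ^ i * [i choose j]` (at `q = α`) is annihilated by the
differential of a first integral as soon as `α ^ l ≠ -1` for `1 ≤ l < j`. -/
lemma IsFirstIntegralN.fderiv_gaussBinom_eq_zero {α : ℂ} (hα : α ≠ 0) {k : ℕ}
    {W : ℤ → ℤ → (Fin (k + 1) → ℂ) → ℂ} (hW : IsFirstIntegralN (LinSol α) k W) (n : ℤ) (j : ℕ)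
    (hj : ∀ l, 1 ≤ l → l < j → α ^ l ≠ -1) (m : ℤ)
    (x : Fin (k + 1) → ℂ) (hx : ∀ i, x i ≠ 0) :
    fderiv ℂ (W n m) x (fun i => (-1) ^ (i : ℕ) * gaussBinom α i j) = 0 := by
  induction j generalizing m x with
  | zero =>
    have h := hW.fderiv_next_row_eq_zero hα (n := n) (m := m - 1) (ξ := fun _ => 0)
      (η := fun i => (-1) ^ i * gaussBinom α i 0)
      (fun i => by simp only [gaussBinom_zero_right]; ring)
      (fun z _ => (fderiv ℂ (W n (m - 1)) z).map_zero) x hx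
    rwa [sub_add_cancel] at h
  | succ j ih =>
    have ih' := ih (fun l h₁ h₂ => hj l h₁ (by omega))
    have hn : α ^ n ≠ 0 := zpow_ne_zero _ hα
    have hc : 1 + α ^ j ≠ 0 := by
      intro h
      rcases Nat.eq_zero_or_pos j with rfl | hpos
      · norm_num at h
      · exact hj j hpos (by omega) (by linear_combination h)
    let b : ℂ := if j = 0 then 0 else α ^ n * (α ^ j / α)
    have h := hW.fderiv_next_row_eq_zero hα (n := n) (m := m - 1)
      (ξ := fun i => (-1) ^ i * gaussBinom α i j)
      (η := fun i => (α ^ n * (α ^ j * (1 + α ^ j))) * ((-1) ^ i * gaussBinom α i (j + 1))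
        + b * ((-1) ^ i * gaussBinom α i j))
      (fun i => by
        rw [zpow_add₀ hα, zpow_natCast]
        have h₁ := pow_mul_gaussBinom α i j
        cases j with
        | zero =>
          simp only [gaussBinom_succ_succ, gaussBinom_zero_right, b, if_true] at h₁ ⊢
          linear_combination 2 * α ^ n * (-1) ^ i * h₁
        | succ j =>
          have h₂ := pow_mul_gaussBinom α i j
          have hb : b = α ^ n * α ^ j := by
            simp only [b, Nat.add_eq_zero_iff, one_ne_zero, and_false, if_false]
            rw [pow_succ, mul_div_cancel_right₀ _ hα]
          simp only [gaussBinom_succ_succ, hb]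
          linear_combination α ^ n * (-1) ^ i * ((1 + α ^ (j + 1)) * h₁ + h₂))
      (fun z hz => ih' (m - 1) z hz) x hx
    rw [sub_add_cancel] at h
    have hsplit : (fun i : Fin (k + 1) =>
        (α ^ n * (α ^ j * (1 + α ^ j))) * ((-1) ^ (i : ℕ) * gaussBinom α i (j + 1))
        + b * ((-1) ^ (i : ℕ) * gaussBinom α i j)) =
        (α ^ n * (α ^ j * (1 + α ^ j))) •
          (fun i : Fin (k + 1) => (-1) ^ (i : ℕ) * gaussBinom α i (j + 1))
        + b • (fun i : Fin (k + 1) => (-1) ^ (i : ℕ) * gaussBinom α i j) := rfl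
    rw [hsplit, map_add, map_smul, map_smul, ih' m x hx, smul_zero, add_zero] at h
    exact (smul_eq_zero.mp h).resolve_left (mul_ne_zero hn (mul_ne_zero (pow_ne_zero _ hα) hc))

/-- If `L_α` possesses a first integral of order `k̂` in the `n`-direction, then
`K(n,k̃) = 0` for some `0 ≤ k̃ < k̂` and all `n`; equivalently (since `α ≠ 0`),
`α^j = −1` for some `1 ≤ j < k̂`. -/
theorem necessary_condition_n_direction (α : ℂ) (hα : α ≠ 0) (khat : ℕ) (hk : 1 ≤ khat)
    (W : ℤ → ℤ → (Fin (khat + 1) → ℂ) → ℂ)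
    (hW : IsFirstIntegralN (LinSol α) khat W) :
    (∃ kt : ℕ, kt < khat ∧ ∀ n : ℤ, Kfun α n kt = 0)
    ∧ (∃ j : ℕ, 1 ≤ j ∧ j < khat ∧ α ^ j = -1) := by
  have key : ∃ j : ℕ, 1 ≤ j ∧ j < khat ∧ α ^ j = -1 := by
    by_contra! hne
    obtain ⟨n, m, x, hx, hlast⟩ := hW.2.2.2
    have h := hW.fderiv_gaussBinom_eq_zero hα n khat hne m x hx
    have hvec : (fun i : Fin (khat + 1) => (-1) ^ (i : ℕ) * gaussBinom α i khat) =
        ((-1) ^ khat : ℂ) • (Pi.single (Fin.last khat) 1 : Fin (khat + 1) → ℂ) := by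
      funext i
      rcases eq_or_ne i (Fin.last khat) with rfl | hi
      · simp [gaussBinom_self]
      · have hlt : (i : ℕ) < khat := Fin.val_lt_last hi
        simp [gaussBinom_eq_zero_of_lt α hlt, hi]
    rw [hvec, map_smul] at h
    exact hlast ((smul_eq_zero.mp h).resolve_left (pow_ne_zero _ (by norm_num)))
  obtain ⟨j, hj1, hjk, hj⟩ := key
  refine ⟨⟨j, hjk, fun n => ?_⟩, j, hj1, hjk, hj⟩
  rw [Kfun, if_neg (by omega), hj]
  ring
end

section
/- Let α ∈ ℂ with α ≠ 0 and let l̂ ≥ 1. Suppose the linear equation L_α possesses a first integral of order l̂ in the m-direction. Then there exists l̃ with 0 ≤ l̃ < l̂ such that H(n,l̃) = 0 for all n ∈ ℤ, where H(n,j) := α^{n−j−1}·(1 + α^{j+1}) for j ≥ 0. Equivalently (since α ≠ 0), there exists j with 1 ≤ j ≤ l̂ and α^j = −1. -/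
/-- `H(n,j) = α^{n−j−1}·(1 + α^{j+1})` for `j ≥ 0`. -/
noncomputable def Hfun (α : ℂ) (n : ℤ) (j : ℕ) : ℂ :=
  α ^ (n - (j : ℤ) - 1) * (1 + α ^ (j + 1))

open Polynomial in
/-- A linear polynomial with root `-a` is coprime to one with root `b ≠ -a`. -/
theorem isCoprime_X_add_C_X_sub_C {a b : ℂ} (h : a + b ≠ 0) :
    IsCoprime (X + C a : ℂ[X]) (X - C b) := by
  refine ⟨C (a + b)⁻¹, -C (a + b)⁻¹, ?_⟩
  have : (C (a + b)⁻¹ * C (a + b) : ℂ[X]) = 1 := by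
    rw [← C_mul, inv_mul_cancel₀ h, C_1]
  rw [C_add] at this
  linear_combination this

/-- A chain on `[m, m + l]` for a family of relations, each total in both directions,
extends to a chain on `ℤ`. -/
theorem exists_int_chain_extending {X : Type*} (R : ℤ → X → X → Prop)
    (hF : ∀ i a, ∃ b, R i a b) (hB : ∀ i b, ∃ a, R i a b) (m : ℤ) (l : ℕ) (f : ℤ → X)
    (hf : ∀ i, m ≤ i → i < m + l → R i (f i) (f (i + 1))) :
    ∃ g : ℤ → X, (∀ i, m ≤ i → i ≤ m + l → g i = f i) ∧ ∀ i, R i (g i) (g (i + 1)) := by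
  choose F hF using hF
  choose B hB using hB
  let up : ℕ → X := fun k => Nat.rec (f (m + l)) (fun k a => F (m + l + k) a) k
  let dn : ℕ → X := fun k => Nat.rec (f m) (fun k a => B (m - (k + 1)) a) k
  have hup : ∀ k : ℕ, R (m + l + k) (up k) (up (k + 1)) := fun k => hF _ _
  have hdn : ∀ k : ℕ, R (m - (k + 1)) (dn (k + 1)) (dn k) := fun k => hB _ _
  let g : ℤ → X := fun i =>
    if i < m then dn (m - i).toNat else if i ≤ m + l then f i else up (i - (m + l)).toNat
  have g_dn : ∀ k : ℕ, g (m - k) = dn k := by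
    intro k
    rcases Nat.eq_zero_or_pos k with rfl | hk
    · simp [g, dn]
    · have h : m - (k : ℤ) < m := by omega
      simp only [g, if_pos h]
      congr 1
      omega
  have g_up : ∀ k : ℕ, g (m + l + k) = up k := by
    intro k
    rcases Nat.eq_zero_or_pos k with rfl | hk
    · simp [g, up]
    · have h : ¬ m + l + (k : ℤ) < m := by omega
      have h' : ¬ m + l + (k : ℤ) ≤ m + l := by omega
      simp only [g, if_neg h, if_neg h']
      congr 1
      omega
  have g_mid : ∀ i, m ≤ i → i ≤ m + l → g i = f i := by
    intro i h₁ h₂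
    simp only [g, if_neg (not_lt.2 h₁), if_pos h₂]
  refine ⟨g, g_mid, fun i => ?_⟩
  rcases lt_or_ge i m with h | h
  · obtain ⟨k, hk⟩ : ∃ k : ℕ, i = m - ((k + 1 : ℕ) : ℤ) := ⟨(m - i - 1).toNat, by omega⟩
    have h' : i + 1 = m - (k : ℤ) := by omega
    rw [h', g_dn, hk, g_dn]
    simpa using hdn k
  rcases lt_or_ge i (m + l) with h₂ | h₂
  · rw [g_mid i h h₂.le, g_mid (i + 1) (by omega) (by omega)]
    exact hf i h h₂
  · obtain ⟨k, hk⟩ : ∃ k : ℕ, i = m + l + (k : ℤ) := ⟨(i - (m + l)).toNat, by omega⟩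
    have h' : i + 1 = m + l + ((k + 1 : ℕ) : ℤ) := by omega
    rw [h', g_up, hk, g_up]
    exact hup k

/-- Every column has a nowhere-vanishing neighbouring column. -/
theorem exists_neighbour_column {a : ℂ} (ha : a ≠ 0) (c : ℤ → ℂ) :
    ∃ d : ℤ → ℂ, (∀ m, d m ≠ 0) ∧ ∀ m, d (m + 1) + c (m + 1) = a * (d m - c m) := by
  obtain ⟨e, -, he⟩ := exists_int_chain_extending
    (fun i (z w : ℂ) => w + c (i + 1) = a * (z - c i))
    (fun i z => ⟨a * (z - c i) - c (i + 1), by ring⟩)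
    (fun i w => ⟨a⁻¹ * (w + c (i + 1)) + c i, by field_simp; ring⟩) 0 0 (fun _ => 0)
    (fun i h₁ h₂ => by omega)
  obtain ⟨s, hs⟩ : ∃ s : ℂ, s ∉ Set.range fun m : ℤ => -e m / a ^ m := by
    by_contra! h
    exact not_countable_complex
      ((Set.countable_range fun m : ℤ => -e m / a ^ m).mono fun s _ => h s)
  refine ⟨fun m => e m + s * a ^ m, fun m hm => hs ⟨m, ?_⟩, fun m => ?_⟩
  · have := zpow_ne_zero m ha
    field_simp
    linear_combination -hm
  · simp only [zpow_add_one₀ ha]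
    linear_combination he m

/-- Nowhere-vanishing related columns in positions `n` and `n + 1` extend to a
nowhere-vanishing solution. -/
theorem exists_linSol_of_columns {α : ℂ} (hα : α ≠ 0) (n : ℤ) (c d : ℤ → ℂ)
    (hc : ∀ m, c m ≠ 0) (hd : ∀ m, d m ≠ 0)
    (h : ∀ m, d (m + 1) + c (m + 1) = α ^ n * (d m - c m)) :
    ∃ w, LinSol α w ∧ (∀ n m, w n m ≠ 0) ∧ w n = c ∧ w (n + 1) = d := by
  obtain ⟨g, hg, hR⟩ := exists_int_chain_extending
    (fun i (c d : {c : ℤ → ℂ // ∀ m, c m ≠ 0}) =>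
      ∀ m, d.1 (m + 1) + c.1 (m + 1) = α ^ i * (d.1 m - c.1 m))
    (fun i c => by
      obtain ⟨d, hd, h⟩ := exists_neighbour_column (zpow_ne_zero i hα) c.1
      exact ⟨⟨d, hd⟩, h⟩)
    (fun i d => by
      obtain ⟨c, hc, h⟩ := exists_neighbour_column (neg_ne_zero.2 (zpow_ne_zero i hα)) d.1
      exact ⟨⟨c, hc⟩, fun m => by linear_combination h m⟩)
    n 1 (fun i => if i = n then ⟨c, hc⟩ else ⟨d, hd⟩)
    (fun i h₁ h₂ => by
      obtain rfl : i = n := by omega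
      simpa using h)
  refine ⟨fun n => (g n).1, fun n m => hR n m, fun n => (g n).2, ?_, ?_⟩
  · simp [hg n le_rfl (by simp)]
  · simp [hg (n + 1) (by simp) (by simp)]

/-- Every complex number is a combination `w + t * z` of nonzero `z` and `w`, where `t ≠ 0`. -/
theorem exists_nonzero_combination {t : ℂ} (ht : t ≠ 0) (s : ℂ) :
    ∃ z w : ℂ, z ≠ 0 ∧ w ≠ 0 ∧ w + t * z = s := by
  obtain ⟨z, hz⟩ := Infinite.exists_notMem_finset ({0, s / t} : Finset ℂ)
  simp only [Finset.mem_insert, Finset.mem_singleton, not_or] at hz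
  refine ⟨z, s - t * z, hz.1, fun h => hz.2 ?_, by ring⟩
  field_simp
  linear_combination -h

/-- Nonvanishing related finite column segments extend to a nowhere-vanishing solution. -/
theorem exists_linSol_of_segments {α : ℂ} (hα : α ≠ 0) (n m : ℤ) (l : ℕ)
    (x y : Fin (l + 1) → ℂ) (hx : ∀ i, x i ≠ 0) (hy : ∀ i, y i ≠ 0)
    (h : ∀ i : Fin l, y i.succ + x i.succ = α ^ n * (y i.castSucc - x i.castSucc)) :
    ∃ w, LinSol α w ∧ (∀ n m, w n m ≠ 0) ∧
      (fun i : Fin (l + 1) => w n (m + ((i : ℕ) : ℤ))) = x ∧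
      (fun i : Fin (l + 1) => w (n + 1) (m + ((i : ℕ) : ℤ))) = y := by
  have ha := zpow_ne_zero n hα
  let f : ℤ → {p : ℂ × ℂ // p.1 ≠ 0 ∧ p.2 ≠ 0} := fun i =>
    ⟨(x (Fin.ofNat (l + 1) (i - m).toNat), y (Fin.ofNat (l + 1) (i - m).toNat)), hx _, hy _⟩
  obtain ⟨g, hg, hR⟩ := exists_int_chain_extending
    (fun _ (p q : {p : ℂ × ℂ // p.1 ≠ 0 ∧ p.2 ≠ 0}) =>
      q.1.2 + q.1.1 = α ^ n * (p.1.2 - p.1.1))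
    (fun _ p => by
      obtain ⟨z, w, hz, hw, hzw⟩ :=
        exists_nonzero_combination one_ne_zero (α ^ n * (p.1.2 - p.1.1))
      exact ⟨⟨(z, w), hz, hw⟩, by linear_combination hzw⟩)
    (fun _ q => by
      obtain ⟨z, w, hz, hw, hzw⟩ :=
        exists_nonzero_combination (neg_ne_zero.2 one_ne_zero) ((q.1.2 + q.1.1) / α ^ n)
      refine ⟨⟨(z, w), hz, hw⟩, ?_⟩
      rw [eq_div_iff ha] at hzw
      linear_combination -hzw)
    m l f
    (fun i h₁ h₂ => by
      obtain ⟨k, rfl⟩ : ∃ k : ℕ, i = m + (k : ℤ) := ⟨(i - m).toNat, by omega⟩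
      have hk : k < l := by omega
      have e₁ : Fin.ofNat (l + 1) (m + (k : ℤ) - m).toNat = (⟨k, hk⟩ : Fin l).castSucc := by
        ext
        simp
        omega
      have e₂ : Fin.ofNat (l + 1) (m + (k : ℤ) + 1 - m).toNat = (⟨k, hk⟩ : Fin l).succ := by
        ext
        have : (m + (k : ℤ) + 1 - m).toNat = k + 1 := by omega
        simp [this, hk]
      simp only [f, e₁, e₂]
      exact h _)
  obtain ⟨w, hw, hw0, hwn, hwn'⟩ := exists_linSol_of_columns hα n (fun i => (g i).1.1)
    (fun i => (g i).1.2) (fun i => (g i).2.1) (fun i => (g i).2.2) hR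
  refine ⟨w, hw, hw0, funext fun i => ?_, funext fun i => ?_⟩
  · have := i.isLt
    simp [hwn, hg (m + ((i : ℕ) : ℤ)) (by omega) (by omega), f]
  · have := i.isLt
    simp [hwn', hg (m + ((i : ℕ) : ℤ)) (by omega) (by omega), f]

/-- Infinitesimal form of the invariance of a first integral: the differentials at related
nonvanishing segments agree on related tangent vectors. -/
theorem IsFirstIntegralM.fderiv_eq {α : ℂ} (hα : α ≠ 0) {l : ℕ}
    {W : ℤ → ℤ → (Fin (l + 1) → ℂ) → ℂ} (hW : IsFirstIntegralM (LinSol α) l W) (n m : ℤ)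
    {x y ξ η : Fin (l + 1) → ℂ} (hx : ∀ i, x i ≠ 0) (hy : ∀ i, y i ≠ 0)
    (h : ∀ i : Fin l, y i.succ + x i.succ = α ^ n * (y i.castSucc - x i.castSucc))
    (h' : ∀ i : Fin l, η i.succ + ξ i.succ = α ^ n * (η i.castSucc - ξ i.castSucc)) :
    fderiv ℂ (W (n + 1) m) y η = fderiv ℂ (W n m) x ξ := by
  have curve : ∀ z ζ : Fin (l + 1) → ℂ, HasDerivAt (fun s : ℂ => z + s • ζ) ζ 0 := by
    intro z ζ
    simpa using ((hasDerivAt_id (0 : ℂ)).smul_const ζ).const_add z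
  have near : ∀ z ζ : Fin (l + 1) → ℂ, (∀ i, z i ≠ 0) →
      ∀ᶠ s : ℂ in nhds 0, ∀ i, (z + s • ζ) i ≠ 0 := by
    intro z ζ hz
    refine Filter.eventually_all.2 fun i => ?_
    have hc : ContinuousAt (fun s : ℂ => (z + s • ζ) i) 0 := by
      simp only [Pi.add_apply, Pi.smul_apply]
      fun_prop
    exact hc.eventually_ne (by simpa using hz i)
  have deriv_along : ∀ (k : ℤ) (z ζ : Fin (l + 1) → ℂ), (∀ i, z i ≠ 0) →
      HasDerivAt (fun s : ℂ => W k m (z + s • ζ)) (fderiv ℂ (W k m) z ζ) 0 := by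
    intro k z ζ hz
    exact (hW.1 k m z hz).hasFDerivAt.comp_hasDerivAt_of_eq 0 (curve z ζ) (by simp)
  refine (deriv_along (n + 1) y η hy).unique ((deriv_along n x ξ hx).congr_of_eventuallyEq ?_)
  filter_upwards [near x ξ hx, near y η hy] with s hxs hys
  obtain ⟨w, hw, hw0, hwx, hwy⟩ := exists_linSol_of_segments hα n m l _ _ hxs hys
    (fun i => by
      simp only [Pi.add_apply, Pi.smul_apply, smul_eq_mul]
      linear_combination h i + s * h' i)
  have := hW.2.1 w hw hw0 n m
  rwa [hwx, hwy] at this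

open Polynomial in
/-- The polynomial whose coefficients are the values of a functional on the standard basis. -/
noncomputable def symbolPoly {l : ℕ} (φ : (Fin (l + 1) → ℂ) →L[ℂ] ℂ) : ℂ[X] :=
  ∑ i : Fin (l + 1), C (φ (Pi.single i 1)) * X ^ (i : ℕ)

open Polynomial in
theorem eval_symbolPoly {l : ℕ} (φ : (Fin (l + 1) → ℂ) →L[ℂ] ℂ) (t : ℂ) :
    (symbolPoly φ).eval t = φ (fun i => t ^ (i : ℕ)) := by
  have h : (fun i : Fin (l + 1) => t ^ (i : ℕ)) =
      ∑ i : Fin (l + 1), t ^ (i : ℕ) • Pi.single i (1 : ℂ) :=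
    pi_eq_sum_univ' _
  rw [h, map_sum, symbolPoly, eval_finsetSum]
  refine Finset.sum_congr rfl fun i _ => ?_
  rw [eval_mul, eval_C, eval_pow, eval_X, map_smul, smul_eq_mul, mul_comm]

open Polynomial in
theorem natDegree_symbolPoly_le {l : ℕ} (φ : (Fin (l + 1) → ℂ) →L[ℂ] ℂ) :
    (symbolPoly φ).natDegree ≤ l :=
  natDegree_sum_le_of_forall_le _ _ fun i _ =>
    (natDegree_C_mul_X_pow_le _ _).trans (Nat.lt_succ_iff.1 i.isLt)

open Polynomial in
theorem coeff_zero_symbolPoly {l : ℕ} (φ : (Fin (l + 1) → ℂ) →L[ℂ] ℂ) :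
    (symbolPoly φ).coeff 0 = φ (Pi.single 0 1) := by
  rw [symbolPoly, finsetSum_coeff, Finset.sum_eq_single 0]
  · simp
  · intro i _ hi
    have : (i : ℕ) ≠ 0 := fun h => hi (Fin.ext h)
    simp [coeff_X_pow, this.symm]
  · simp

open Polynomial in
/-- If polynomials `p k` satisfy `(X + α^(n+k)) p (k+1) = -(X - α^(n+k)) p k` and no power
`α^j` with `j < N` equals `-1`, then `N` linear factors divide `p 0`. -/
theorem prod_X_add_C_dvd {α : ℂ} (hα : α ≠ 0) (n : ℤ) (N : ℕ) (p : ℕ → ℂ[X])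
    (hp : ∀ k : ℕ, (X + C (α ^ (n + k))) * p (k + 1) = -(X - C (α ^ (n + k))) * p k)
    (hN : ∀ j, j < N → α ^ j ≠ -1) :
    ∏ k ∈ Finset.range N, (X + C (α ^ (n + (k : ℤ)))) ∣ p 0 := by
  have telescope : ∀ K : ℕ, (∏ k ∈ Finset.range K, (X + C (α ^ (n + (k : ℤ))))) * p K =
      (-1) ^ K * (∏ k ∈ Finset.range K, (X - C (α ^ (n + (k : ℤ))))) * p 0 := by
    intro K
    induction K with
    | zero => simp
    | succ K ih =>
      rw [Finset.prod_range_succ, Finset.prod_range_succ, pow_succ]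
      linear_combination (∏ k ∈ Finset.range K, (X + C (α ^ (n + (k : ℤ))))) * hp K
        - (X - C (α ^ (n + (K : ℤ)))) * ih
  have sum_ne : ∀ i j : ℕ, i ≤ j → j < N → α ^ (n + (i : ℤ)) + α ^ (n + (j : ℤ)) ≠ 0 := by
    intro i j hij hj h
    refine hN (j - i) (by omega) ?_
    have e : n + (j : ℤ) = n + i + ((j - i : ℕ) : ℤ) := by omega
    rw [e, zpow_add₀ hα (n + i), zpow_natCast] at h
    have := zpow_ne_zero (n + (i : ℤ)) hα
    apply mul_left_cancel₀ this
    linear_combination h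
  have coprime : IsCoprime (∏ k ∈ Finset.range N, (X + C (α ^ (n + (k : ℤ)))))
      (∏ k ∈ Finset.range N, (X - C (α ^ (n + (k : ℤ))))) := by
    refine IsCoprime.prod_left fun i hi => IsCoprime.prod_right fun j hj => ?_
    rw [Finset.mem_range] at hi hj
    refine isCoprime_X_add_C_X_sub_C ?_
    rcases le_total i j with hij | hij
    · exact sum_ne i j hij hj
    · rw [add_comm]
      exact sum_ne j i hij hi
  refine coprime.dvd_of_dvd_mul_left ⟨(-1) ^ N * p N, ?_⟩
  have hsq : ((-1 : ℂ[X]) ^ N) * (-1) ^ N = 1 := by rw [← mul_pow]; simp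
  linear_combination (-(-1) ^ N) * telescope N
    - (∏ k ∈ Finset.range N, (X - C (α ^ (n + (k : ℤ))))) * p 0 * hsq

open Polynomial in
/-- If `L_α` has a first integral of order `l` in the `m`-direction, then some power `α^j` with
`1 ≤ j ≤ l` equals `-1`. -/
theorem IsFirstIntegralM.exists_pow_eq_neg_one {α : ℂ} (hα : α ≠ 0) {l : ℕ}
    {W : ℤ → ℤ → (Fin (l + 1) → ℂ) → ℂ} (hW : IsFirstIntegralM (LinSol α) l W) :
    ∃ j : ℕ, 1 ≤ j ∧ j ≤ l ∧ α ^ j = -1 := by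
  by_contra! hj
  obtain ⟨n, m, x, hx, hne⟩ := hW.2.2.1
  obtain ⟨c, hc, hcx⟩ : ∃ c : ℤ → ℂ, (∀ i, c i ≠ 0) ∧
      (fun i : Fin (l + 1) => c (m + ((i : ℕ) : ℤ))) = x :=
    ⟨fun i => x (Fin.ofNat (l + 1) (i - m).toNat), fun i => hx _, by simp⟩
  obtain ⟨d, hd, hcd⟩ := exists_neighbour_column (zpow_ne_zero n hα) c
  obtain ⟨w, hw, hw0, rfl, -⟩ := exists_linSol_of_columns hα n c d hc hd hcd
  subst hcx
  let p : ℕ → ℂ[X] := fun k => symbolPoly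
    (fderiv ℂ (W (n + k) m) fun i : Fin (l + 1) => w (n + k) (m + ((i : ℕ) : ℤ)))
  have hp : ∀ k : ℕ,
      (X + C (α ^ (n + (k : ℤ)))) * p (k + 1) = -(X - C (α ^ (n + (k : ℤ)))) * p k := by
    intro k
    refine Polynomial.funext fun t => ?_
    have e : n + ((k + 1 : ℕ) : ℤ) = n + k + 1 := by push_cast; ring
    have key := hW.fderiv_eq hα (n + k) m
      (x := fun i => w (n + k) (m + ((i : ℕ) : ℤ)))
      (y := fun i => w (n + k + 1) (m + ((i : ℕ) : ℤ)))
      (ξ := (t - α ^ (n + (k : ℤ))) • fun i : Fin (l + 1) => t ^ (i : ℕ))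
      (η := (-(t + α ^ (n + (k : ℤ)))) • fun i : Fin (l + 1) => t ^ (i : ℕ))
      (fun _ => hw0 _ _) (fun _ => hw0 _ _)
      (fun i => by
        have := hw (n + k) (m + ((i : ℕ) : ℤ))
        simpa [add_assoc] using this)
      (fun i => by
        simp only [Pi.smul_apply, smul_eq_mul, Fin.val_succ, Fin.val_castSucc, pow_succ]
        ring)
    simp only [map_smul, smul_eq_mul] at key
    simp only [p, eval_mul, eval_add, eval_neg, eval_sub, eval_X, eval_C, eval_symbolPoly, e]
    linear_combination -key
  have hdvd := prod_X_add_C_dvd hα n (l + 1) p hp fun j hjl h => by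
    rcases Nat.eq_zero_or_pos j with rfl | hpos
    · norm_num at h
    · exact hj j hpos (by omega) h
  have hzero : p 0 = 0 := by
    refine eq_zero_of_dvd_of_natDegree_lt hdvd ?_
    rw [natDegree_prod_of_monic _ _ fun k _ => monic_X_add_C _]
    simpa using Nat.lt_succ_of_le (natDegree_symbolPoly_le _)
  apply hne
  have := coeff_zero_symbolPoly
    (fderiv ℂ (W n m) fun i : Fin (l + 1) => w n (m + ((i : ℕ) : ℤ)))
  rw [← this]
  have h0 : (p 0).coeff 0 = 0 := by simp [hzero]
  simpa [p] using h0

/-- If `L_α` possesses a first integral of order `l̂` in the `m`-direction, then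
`H(n,l̃) = 0` for some `0 ≤ l̃ < l̂` and all `n`; equivalently (since `α ≠ 0`),
`α^j = −1` for some `1 ≤ j ≤ l̂`. -/
theorem necessary_condition_m_direction (α : ℂ) (hα : α ≠ 0) (lhat : ℕ) (hl : 1 ≤ lhat)
    (W : ℤ → ℤ → (Fin (lhat + 1) → ℂ) → ℂ)
    (hW : IsFirstIntegralM (LinSol α) lhat W) :
    (∃ lt : ℕ, lt < lhat ∧ ∀ n : ℤ, Hfun α n lt = 0)
    ∧ (∃ j : ℕ, 1 ≤ j ∧ j ≤ lhat ∧ α ^ j = -1) := by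
  obtain ⟨j, hj₁, hj₂, hj⟩ := hW.exists_pow_eq_neg_one hα
  refine ⟨⟨j - 1, by omega, fun n => ?_⟩, j, hj₁, hj₂, hj⟩
  rw [Hfun, Nat.sub_add_cancel hj₁, hj, add_neg_cancel, mul_zero]
end

section
/- Let N ≥ 1 and let α ∈ ℂ satisfy α^N = −1 and α^j ≠ −1 for all 1 ≤ j < N. If the linear equation L_α possesses a first integral of order k̂ in the n-direction, then k̂ ≥ N + 1. -/
/-- Two-sided dependent choice: a chain prescribed on `[a, b]` extends to all of `ℤ`. -/
theorem exists_int_chain_extending_s11 {T : Type*} {R : ℤ → T → T → Prop}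
    (hright : ∀ j t, ∃ t', R j t t') (hleft : ∀ j t', ∃ t, R j t t')
    {a b : ℤ} (hab : a ≤ b) (f₀ : ℤ → T)
    (h₀ : ∀ j, a ≤ j → j < b → R j (f₀ j) (f₀ (j + 1))) :
    ∃ f : ℤ → T, (∀ j, a ≤ j → j ≤ b → f j = f₀ j) ∧ ∀ j, R j (f j) (f (j + 1)) := by
  choose next hnext using hright
  choose prev hprev using hleft
  let r : ℕ → T := fun i => Nat.rec (f₀ b) (fun i t => next (b + i) t) i
  let l : ℕ → T := fun i => Nat.rec (f₀ a) (fun i t => prev (a - i - 1) t) i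
  have hr : ∀ i : ℕ, R (b + i) (r i) (r (i + 1)) := fun i => hnext _ _
  have hl : ∀ i : ℕ, R (a - i - 1) (l (i + 1)) (l i) := fun i => hprev _ _
  let f : ℤ → T := fun j =>
    if j < a then l (a - j).toNat else if j ≤ b then f₀ j else r (j - b).toNat
  have hfl : ∀ i : ℕ, f (a - i) = l i := by
    intro i
    rcases i with _ | i
    · simp [f, hab, l]
    · have : a - ((i + 1 : ℕ) : ℤ) < a := by omega
      have e : (a - (a - ((i + 1 : ℕ) : ℤ))).toNat = i + 1 := by omega
      simp only [f, if_pos this, e]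
  have hfr : ∀ i : ℕ, f (b + i) = r i := by
    intro i
    rcases i with _ | i
    · simp [f, hab, r]
    · have h1 : ¬ b + ((i + 1 : ℕ) : ℤ) < a := by omega
      have h2 : ¬ b + ((i + 1 : ℕ) : ℤ) ≤ b := by omega
      have e : (b + ((i + 1 : ℕ) : ℤ) - b).toNat = i + 1 := by omega
      simp only [f, if_neg h1, if_neg h2, e]
  have hf₀ : ∀ j, a ≤ j → j ≤ b → f j = f₀ j := by
    intro j h1 h2
    simp only [f, if_neg (not_lt.2 h1), if_pos h2]
  refine ⟨f, hf₀, fun j => ?_⟩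
  rcases lt_or_ge j a with hj | hj
  · obtain ⟨i, rfl⟩ : ∃ i : ℕ, j = a - i - 1 := ⟨(a - j - 1).toNat, by omega⟩
    have e1 : a - (i : ℤ) - 1 = a - ((i + 1 : ℕ) : ℤ) := by push_cast; ring
    rw [sub_add_cancel, hfl i, show f (a - i - 1) = l (i + 1) by rw [e1, hfl]]
    exact hl i
  rcases lt_or_ge j b with hjb | hjb
  · rw [hf₀ j hj hjb.le, hf₀ (j + 1) (by omega) (by omega)]
    exact h₀ j hj hjb
  · obtain ⟨i, rfl⟩ : ∃ i : ℕ, j = b + i := ⟨(j - b).toNat, by omega⟩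
    have e1 : b + (i : ℤ) + 1 = b + ((i + 1 : ℕ) : ℤ) := by push_cast; ring
    rw [e1, hfr i, hfr (i + 1)]
    exact hr i

theorem exists_forall_add_mul_ne_zero {ι : Type*} [Countable ι] (g s : ι → ℂ)
    (hs : ∀ i, s i ≠ 0) : ∃ c : ℂ, ∀ i, g i + c * s i ≠ 0 := by
  obtain ⟨c, hc⟩ := ((Set.countable_range fun i => -g i / s i).dense_compl ℂ).nonempty
  refine ⟨c, fun i hi => hc ⟨i, ?_⟩⟩
  have := hs i
  field_simp
  linear_combination -hi

/-- `X` and `Y` are consecutive rows of a solution of `L_α`. -/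
def RowRel (α : ℂ) (X Y : ℤ → ℂ) : Prop :=
  ∀ j : ℤ, Y (j + 1) + Y j = α ^ j * (X (j + 1) - X j)

theorem exists_nonvanishing_next_row (α : ℂ) (X : ℤ → ℂ) :
    ∃ Y : ℤ → ℂ, (∀ j, Y j ≠ 0) ∧ RowRel α X Y := by
  obtain ⟨P, -, hP⟩ := exists_int_chain_extending_s11 (T := ℂ)
    (R := fun j t t' => t' + t = α ^ j * (X (j + 1) - X j))
    (fun j t => ⟨α ^ j * (X (j + 1) - X j) - t, by ring⟩)
    (fun j t => ⟨α ^ j * (X (j + 1) - X j) - t, by ring⟩)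
    (le_refl 0) (fun _ => 0) (fun j h1 h2 => by omega)
  obtain ⟨c, hc⟩ := exists_forall_add_mul_ne_zero P (fun j : ℤ => (-1 : ℂ) ^ j)
    (fun j => zpow_ne_zero _ (by norm_num))
  refine ⟨_, hc, fun j => ?_⟩
  have : (-1 : ℂ) ^ (j + 1) = -(-1) ^ j := by rw [zpow_add_one₀ (by norm_num)]; ring
  rw [this, ← hP j]
  ring

theorem exists_nonvanishing_prev_row {α : ℂ} (hα : α ≠ 0) (Y : ℤ → ℂ) :
    ∃ X : ℤ → ℂ, (∀ j, X j ≠ 0) ∧ RowRel α X Y := by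
  have hα' : ∀ j : ℤ, α ^ j ≠ 0 := fun j => zpow_ne_zero j hα
  obtain ⟨P, -, hP⟩ := exists_int_chain_extending_s11 (T := ℂ)
    (R := fun j t t' => Y (j + 1) + Y j = α ^ j * (t' - t))
    (fun j t => ⟨t + (Y (j + 1) + Y j) / α ^ j, by have := hα' j; field_simp; ring⟩)
    (fun j t => ⟨t - (Y (j + 1) + Y j) / α ^ j, by have := hα' j; field_simp; ring⟩)
    (le_refl 0) (fun _ => 0) (fun j h1 h2 => by omega)
  obtain ⟨c, hc⟩ := exists_forall_add_mul_ne_zero P (fun _ : ℤ => (1 : ℂ))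
    (fun j => one_ne_zero)
  refine ⟨_, hc, fun j => ?_⟩
  rw [hP j]
  ring

/-- `x` and `y` are consecutive rows of a solution of `L_α` restricted to `n, …, n + k`. -/
def SegmentRel (α : ℂ) (n : ℤ) {k : ℕ} (x y : Fin (k + 1) → ℂ) : Prop :=
  ∀ i : Fin k, y i.succ + y i.castSucc =
    α ^ (n + ((i : ℕ) : ℤ)) * (x i.succ - x i.castSucc)

theorem SegmentRel.add_smul {α : ℂ} {n : ℤ} {k : ℕ} {x y u w : Fin (k + 1) → ℂ}
    (h : SegmentRel α n x y) (h' : SegmentRel α n u w) (t : ℂ) :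
    SegmentRel α n (x + t • u) (y + t • w) := by
  intro i
  simp only [Pi.add_apply, Pi.smul_apply, smul_eq_mul]
  linear_combination h i + t * h' i

/-- Extension of a finite segment, placed at `n`, to `ℤ` by the constant `1`. -/
noncomputable def padOne {k : ℕ} (n : ℤ) (x : Fin (k + 1) → ℂ) (j : ℤ) : ℂ :=
  if h : n ≤ j ∧ (j - n).toNat < k + 1 then x ⟨(j - n).toNat, h.2⟩ else 1

theorem padOne_add {k : ℕ} (n : ℤ) (x : Fin (k + 1) → ℂ) (i : Fin (k + 1)) :
    padOne n x (n + ((i : ℕ) : ℤ)) = x i := by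
  have e : (n + ((i : ℕ) : ℤ) - n).toNat = i := by omega
  have h : n ≤ n + ((i : ℕ) : ℤ) ∧ (n + ((i : ℕ) : ℤ) - n).toNat < k + 1 := by
    have := i.isLt
    omega
  rw [padOne, dif_pos h]
  congr 1
  exact Fin.ext e

theorem padOne_ne_zero {k : ℕ} (n : ℤ) {x : Fin (k + 1) → ℂ} (hx : ∀ i, x i ≠ 0) (j : ℤ) :
    padOne n x j ≠ 0 := by
  unfold padOne
  split_ifs
  · exact hx _
  · exact one_ne_zero

theorem RowRel.segmentRel {α : ℂ} {X Y : ℤ → ℂ} (h : RowRel α X Y) (n : ℤ) (k : ℕ) :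
    SegmentRel α n (fun i : Fin (k + 1) => X (n + ((i : ℕ) : ℤ)))
      (fun i : Fin (k + 1) => Y (n + ((i : ℕ) : ℤ))) := by
  intro i
  have := h (n + ((i : ℕ) : ℤ))
  simpa [add_assoc] using this

theorem exists_segmentRel_left {α : ℂ} (hα : α ≠ 0) (n : ℤ) {k : ℕ} (y : Fin (k + 1) → ℂ) :
    ∃ x : Fin (k + 1) → ℂ, (∀ i, x i ≠ 0) ∧ SegmentRel α n x y := by
  obtain ⟨X, hX, hXY⟩ := exists_nonvanishing_prev_row hα (padOne n y)
  have := hXY.segmentRel n k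
  simp only [padOne_add] at this
  exact ⟨_, fun i => hX _, this⟩

theorem SegmentRel.exists_rowRel {α : ℂ} (hα : α ≠ 0) {n : ℤ} {k : ℕ}
    {x y : Fin (k + 1) → ℂ} (h : SegmentRel α n x y)
    (hx : ∀ i, x i ≠ 0) (hy : ∀ i, y i ≠ 0) :
    ∃ X Y : ℤ → ℂ, (∀ j, X j ≠ 0) ∧ (∀ j, Y j ≠ 0) ∧ RowRel α X Y ∧
      (∀ i : Fin (k + 1), X (n + ((i : ℕ) : ℤ)) = x i) ∧
      (∀ i : Fin (k + 1), Y (n + ((i : ℕ) : ℤ)) = y i) := by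
  have hα' : ∀ j : ℤ, α ^ j ≠ 0 := fun j => zpow_ne_zero j hα
  obtain ⟨f, hf, hR⟩ := exists_int_chain_extending_s11
    (T := {p : ℂ × ℂ // p.1 ≠ 0 ∧ p.2 ≠ 0})
    (R := fun j p q => q.1.2 + p.1.2 = α ^ j * (q.1.1 - p.1.1))
    (by
      rintro j ⟨⟨a, b⟩, -⟩
      obtain ⟨c, hc⟩ := exists_forall_add_mul_ne_zero ![0, -b - α ^ j * a] ![1, α ^ j]
        (by intro i; fin_cases i <;> simp [hα' j])
      refine ⟨⟨(c, -b - α ^ j * a + c * α ^ j), ?_, hc 1⟩, by ring⟩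
      simpa using hc 0)
    (by
      rintro j ⟨⟨a, b⟩, -⟩
      obtain ⟨c, hc⟩ := exists_forall_add_mul_ne_zero ![0, -b + α ^ j * a] ![1, -α ^ j]
        (by intro i; fin_cases i <;> simp [hα' j])
      refine ⟨⟨(c, -b + α ^ j * a + c * -α ^ j), ?_, hc 1⟩, by ring⟩
      simpa using hc 0)
    (a := n) (b := n + k) (by omega)
    (fun j => ⟨(padOne n x j, padOne n y j), padOne_ne_zero n hx j, padOne_ne_zero n hy j⟩)
    (by
      intro j h1 h2
      obtain ⟨i, rfl⟩ : ∃ i : ℕ, j = n + i := ⟨(j - n).toNat, by omega⟩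
      have hi := h ⟨i, by omega⟩
      rw [← padOne_add n x, ← padOne_add n x, ← padOne_add n y, ← padOne_add n y] at hi
      simpa [add_assoc] using hi)
  refine ⟨fun j => (f j).1.1, fun j => (f j).1.2, fun j => (f j).2.1, fun j => (f j).2.2,
    hR, fun i => ?_, fun i => ?_⟩ <;>
  · have := i.isLt
    simp only [hf (n + ((i : ℕ) : ℤ)) (by omega) (by omega), padOne_add]

theorem SegmentRel.exists_linSol {α : ℂ} (hα : α ≠ 0) {n : ℤ} (m : ℤ) {k : ℕ}
    {x y : Fin (k + 1) → ℂ} (h : SegmentRel α n x y)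
    (hx : ∀ i, x i ≠ 0) (hy : ∀ i, y i ≠ 0) :
    ∃ w : ℤ → ℤ → ℂ, LinSol α w ∧ (∀ n m : ℤ, w n m ≠ 0) ∧
      (∀ i : Fin (k + 1), w (n + ((i : ℕ) : ℤ)) m = x i) ∧
      (∀ i : Fin (k + 1), w (n + ((i : ℕ) : ℤ)) (m + 1) = y i) := by
  obtain ⟨X, Y, hX, hY, hXY, hXx, hYy⟩ := h.exists_rowRel hα hx hy
  obtain ⟨f, hf, hR⟩ := exists_int_chain_extending_s11
    (T := {Z : ℤ → ℂ // ∀ j, Z j ≠ 0}) (R := fun _ Z Z' => RowRel α Z.1 Z'.1)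
    (fun _ Z => by
      obtain ⟨Z', h1, h2⟩ := exists_nonvanishing_next_row α Z.1
      exact ⟨⟨Z', h1⟩, h2⟩)
    (fun _ Z => by
      obtain ⟨Z', h1, h2⟩ := exists_nonvanishing_prev_row hα Z.1
      exact ⟨⟨Z', h1⟩, h2⟩)
    (a := m) (b := m + 1) (by omega)
    (fun j => if j = m then ⟨X, hX⟩ else ⟨Y, hY⟩)
    (by
      intro j h1 h2
      obtain rfl : j = m := by omega
      simpa using hXY)
  refine ⟨fun n m => (f m).1 n, fun n m => hR m n, fun n m => (f m).2 n, fun i => ?_,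
    fun i => ?_⟩
  · simp [hf m (by omega) (by omega), hXx]
  · simp [hf (m + 1) (by omega) (by omega), hYy]

theorem IsFirstIntegralN.eq_of_segmentRel {α : ℂ} (hα : α ≠ 0) {k : ℕ}
    {W : ℤ → ℤ → (Fin (k + 1) → ℂ) → ℂ} (hW : IsFirstIntegralN (LinSol α) k W)
    {n : ℤ} (m : ℤ) {x y : Fin (k + 1) → ℂ} (h : SegmentRel α n x y)
    (hx : ∀ i, x i ≠ 0) (hy : ∀ i, y i ≠ 0) : W n (m + 1) y = W n m x := by
  obtain ⟨w, hw, hw0, hwx, hwy⟩ := h.exists_linSol hα m hx hy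
  simpa only [hwx, hwy] using hW.2.1 w hw hw0 n m

theorem eventually_forall_add_smul_ne_zero {ι : Type*} [Finite ι] {x : ι → ℂ}
    (hx : ∀ i, x i ≠ 0) (u : ι → ℂ) : ∀ᶠ t : ℂ in nhds 0, ∀ i, (x + t • u) i ≠ 0 := by
  refine Filter.eventually_all.2 fun i => ?_
  have hc : ContinuousAt (fun t : ℂ => (x + t • u) i) 0 := by
    simp only [Pi.add_apply, Pi.smul_apply, smul_eq_mul]
    fun_prop
  exact hc.eventually_ne (by simpa using hx i)

theorem hasDerivAt_comp_add_smul {E : Type*} [NormedAddCommGroup E] [NormedSpace ℂ E]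
    {F : E → ℂ} {x : E} (hF : DifferentiableAt ℂ F x) (u : E) :
    HasDerivAt (fun t : ℂ => F (x + t • u)) (fderiv ℂ F x u) 0 :=
  hF.hasFDerivAt.hasLineDerivAt u

theorem IsFirstIntegralN.fderiv_eq_of_segmentRel {α : ℂ} (hα : α ≠ 0) {k : ℕ}
    {W : ℤ → ℤ → (Fin (k + 1) → ℂ) → ℂ} (hW : IsFirstIntegralN (LinSol α) k W)
    {n : ℤ} (m : ℤ) {x y u w : Fin (k + 1) → ℂ} (h : SegmentRel α n x y)
    (hx : ∀ i, x i ≠ 0) (hy : ∀ i, y i ≠ 0) (huw : SegmentRel α n u w) :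
    fderiv ℂ (W n (m + 1)) y w = fderiv ℂ (W n m) x u := by
  refine (hasDerivAt_comp_add_smul (hW.1 n (m + 1) y hy) w).unique
    ((hasDerivAt_comp_add_smul (hW.1 n m x hx) u).congr_of_eventuallyEq ?_)
  filter_upwards [eventually_forall_add_smul_ne_zero hx u,
    eventually_forall_add_smul_ne_zero hy w] with t htx hty
  exact hW.eq_of_segmentRel hα m (h.add_smul huw t) htx hty

/-- `u` annihilates the differential of every `W n m`, for the given `n`. -/
def Annihilates {k : ℕ} (W : ℤ → ℤ → (Fin (k + 1) → ℂ) → ℂ) (n : ℤ)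
    (u : Fin (k + 1) → ℂ) : Prop :=
  ∀ (m : ℤ) (x : Fin (k + 1) → ℂ), (∀ i, x i ≠ 0) → fderiv ℂ (W n m) x u = 0

theorem Annihilates.of_segmentRel {α : ℂ} (hα : α ≠ 0) {k : ℕ}
    {W : ℤ → ℤ → (Fin (k + 1) → ℂ) → ℂ} (hW : IsFirstIntegralN (LinSol α) k W)
    {n : ℤ} {u w : Fin (k + 1) → ℂ} (hu : Annihilates W n u) (huw : SegmentRel α n u w) :
    Annihilates W n w := by
  intro m y hy
  obtain ⟨x, hx, hxy⟩ := exists_segmentRel_left hα n y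
  have := hW.fderiv_eq_of_segmentRel hα (m - 1) hxy hx hy huw
  rwa [hu _ x hx, sub_add_cancel] at this

theorem annihilates_geometric {α : ℂ} (hα : α ≠ 0) {k : ℕ}
    {W : ℤ → ℤ → (Fin (k + 1) → ℂ) → ℂ} (hW : IsFirstIntegralN (LinSol α) k W) (n : ℤ) {N : ℕ}
    (hneg : ∀ j : ℕ, j < N → α ^ j ≠ -1) (hone : ∀ j : ℕ, 1 ≤ j → j ≤ N → α ^ j ≠ 1)
    {j : ℕ} (hj : j ≤ N) : Annihilates W n (fun i => (-α ^ j) ^ (i : ℕ)) := by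
  induction j with
  | zero =>
    have h0 : Annihilates W n 0 := fun m x _ => map_zero _
    refine h0.of_segmentRel hα hW fun i => ?_
    simp [pow_succ]
  | succ j ih =>
    have h1 : 1 - α ^ (j + 1) ≠ 0 := sub_ne_zero.2 (hone (j + 1) (by omega) hj).symm
    have h2 : α ^ j + 1 ≠ 0 := fun h => hneg j (by omega) (eq_neg_of_add_eq_zero_left h)
    have hn : α ^ n ≠ 0 := zpow_ne_zero n hα
    set c : ℂ := α ^ n * (-α ^ j - 1) / (1 - α ^ (j + 1))
    have hcm : c * (1 - α ^ (j + 1)) = α ^ n * (-α ^ j - 1) := div_mul_cancel₀ _ h1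
    have hc0 : c ≠ 0 := by
      refine div_ne_zero (mul_ne_zero hn ?_) h1
      rw [← neg_add']
      exact neg_ne_zero.2 h2
    have key : Annihilates W n (c • fun i : Fin (k + 1) => (-α ^ (j + 1)) ^ (i : ℕ)) := by
      refine (ih (by omega)).of_segmentRel hα hW fun i => ?_
      have e : (-α ^ (j + 1)) ^ (i : ℕ) = α ^ (i : ℕ) * (-α ^ j) ^ (i : ℕ) := by
        rw [← mul_pow]; ring
      simp only [Pi.smul_apply, smul_eq_mul, Fin.val_succ, Fin.val_castSucc, pow_succ _ (i : ℕ),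
        zpow_add₀ hα, zpow_natCast, e]
      linear_combination α ^ (i : ℕ) * (-α ^ j) ^ (i : ℕ) * hcm
    intro m x hx
    have := key m x hx
    rw [map_smul, smul_eq_mul] at this
    exact (mul_eq_zero.1 this).resolve_left hc0

theorem linearMap_eq_zero_of_vandermonde {K : Type*} [Field K] {k : ℕ} {v : Fin k → K}
    (hv : Function.Injective v) (L : (Fin k → K) →ₗ[K] K)
    (hL : ∀ j, L (fun i => v j ^ (i : ℕ)) = 0) : L = 0 := by
  have h0 : (fun i => L fun j => if i = j then 1 else 0) = 0 := by
    refine Matrix.eq_zero_of_mulVec_eq_zero (Matrix.det_vandermonde_ne_zero_iff.2 hv) ?_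
    ext j
    have := hL j
    rw [L.pi_apply_eq_sum_univ] at this
    simpa [Matrix.mulVec, dotProduct, Matrix.vandermonde_apply] using this
  refine LinearMap.ext fun u => ?_
  rw [L.pi_apply_eq_sum_univ]
  exact Finset.sum_eq_zero fun i _ => by rw [congrFun h0 i, Pi.zero_apply, smul_zero]

/-- If `α^N = −1` with `N` minimal, then any `n`-direction first integral of `L_α`
has order at least `N + 1`. -/
theorem order_lower_bound_n_direction_linear (N : ℕ) (hN : 1 ≤ N) (α : ℂ)
    (hαN : α ^ N = -1) (hmin : ∀ j : ℕ, 1 ≤ j → j < N → α ^ j ≠ -1)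
    (khat : ℕ) (hk : 1 ≤ khat)
    (W : ℤ → ℤ → (Fin (khat + 1) → ℂ) → ℂ)
    (hW : IsFirstIntegralN (LinSol α) khat W) :
    N + 1 ≤ khat := by
  by_contra! hlt
  have hkN : khat ≤ N := by omega
  have hα : α ≠ 0 := by
    rintro rfl
    rw [zero_pow (by omega)] at hαN
    norm_num at hαN
  have hneg : ∀ j : ℕ, j < N → α ^ j ≠ -1 := by
    intro j hj
    rcases Nat.eq_zero_or_pos j with rfl | hj0
    · norm_num
    · exact hmin j hj0 hj
  have hone : ∀ j : ℕ, 1 ≤ j → j ≤ N → α ^ j ≠ 1 := by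
    intro j h1 h2 h
    refine hneg (N - j) (by omega) ?_
    rw [← hαN, ← Nat.sub_add_cancel h2, pow_add, h, mul_one, Nat.sub_add_cancel h2]
  have hne : ∀ a b : ℕ, a < b → b ≤ N → α ^ a ≠ α ^ b := by
    intro a b hab hb h
    refine hone (b - a) (by omega) (by omega) (mul_left_cancel₀ (pow_ne_zero a hα) ?_)
    rw [← pow_add, mul_one, h, Nat.add_sub_cancel' hab.le]
  have hinj : Function.Injective fun j : Fin (khat + 1) => -α ^ (j : ℕ) := by
    intro a b h
    have h' : α ^ (a : ℕ) = α ^ (b : ℕ) := neg_injective h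
    have ha := a.isLt
    have hb := b.isLt
    rcases lt_trichotomy (a : ℕ) b with hab | hab | hab
    · exact absurd h' (hne _ _ hab (by omega))
    · exact Fin.ext hab
    · exact absurd h'.symm (hne _ _ hab (by omega))
  obtain ⟨n, m, x, hx, hxne⟩ := hW.2.2.1
  have hL := linearMap_eq_zero_of_vandermonde hinj (fderiv ℂ (W n m) x).toLinearMap fun j =>
    annihilates_geometric hα hW n hneg hone (j := j) (by have := j.isLt; omega) m x hx
  exact hxne (congrArg (fun L => L (Pi.single 0 1)) hL)
end

section
/- Let N ≥ 1 and let α ∈ ℂ satisfy α^N = −1 and α^j ≠ −1 for all 1 ≤ j < N. If the linear equation L_α possesses a first integral of order l̂ in the m-direction, then l̂ ≥ N. -/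
/-- A relation between consecutive terms that can be solved both forwards and backwards admits a
two-sided sequence through any prescribed value. -/
theorem exists_int_seq_of_step {A : Type*} (R : ℤ → A → A → Prop)
    (hf : ∀ n a, ∃ b, R n a b) (hb : ∀ n b, ∃ a, R n a b) (n₀ : ℤ) (a₀ : A) :
    ∃ s : ℤ → A, s n₀ = a₀ ∧ ∀ n, R n (s n) (s (n + 1)) := by
  choose f hf using hf
  choose g hg using hb
  let p : ℕ → A := fun k => Nat.rec a₀ (fun i a => f (n₀ + i) a) k
  let q : ℕ → A := fun k => Nat.rec a₀ (fun i a => g (n₀ - i - 1) a) k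
  have hp : ∀ k : ℕ, R (n₀ + k) (p k) (p (k + 1)) := fun k => hf _ _
  have hq : ∀ k : ℕ, R (n₀ - k - 1) (q (k + 1)) (q k) := fun k => hg _ _
  refine ⟨fun n => if n₀ ≤ n then p (n - n₀).toNat else q (n₀ - n).toNat, by simp [p], ?_⟩
  intro n
  rcases le_or_gt n₀ n with h | h
  · obtain ⟨k, rfl⟩ := Int.le.dest h
    have h2 : (n₀ + k + 1 - n₀).toNat = k + 1 := by omega
    have h3 : (n₀ + k - n₀).toNat = k := by omega
    simpa [h2, h3, show n₀ ≤ n₀ + k + 1 by omega] using hp k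
  · obtain ⟨k, hk⟩ := Int.le.dest (show n + 1 ≤ n₀ from h)
    obtain rfl : n = n₀ - k - 1 := by omega
    have h2 : (n₀ - (n₀ - k - 1)).toNat = k + 1 := by omega
    have h4 : ¬ n₀ ≤ n₀ - k - 1 := by omega
    simp only [if_neg h4, h2]
    rcases Nat.eq_zero_or_pos k with rfl | hk0
    · simpa [p, q] using hq 0
    · have h3 : (n₀ - (n₀ - k - 1 + 1)).toNat = k := by omega
      have h5 : ¬ n₀ ≤ n₀ - k - 1 + 1 := by omega
      simpa only [if_neg h5, h3] using hq k

/-- A first-order inhomogeneous linear recurrence over `ℤ` has a nowhere-vanishing solution. -/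
theorem exists_linear_recurrence_ne_zero (a : ℂ) (ha : a ≠ 0) (h : ℤ → ℂ) :
    ∃ g : ℤ → ℂ, (∀ m, g m ≠ 0) ∧ ∀ m, g (m + 1) = a * g m + h m := by
  obtain ⟨S, -, hS⟩ := exists_int_seq_of_step (fun m x y => y = x + a ^ (-(m + 1)) * h m)
    (fun m x => ⟨_, rfl⟩) (fun m y => ⟨y - a ^ (-(m + 1)) * h m, by ring⟩) 0 (0 : ℂ)
  obtain ⟨t, ht⟩ := (Set.countable_range fun m => -S m).dense_compl ℝ |>.nonempty
  refine ⟨fun m => a ^ m * (t + S m), fun m => mul_ne_zero (zpow_ne_zero _ ha) ?_, fun m => ?_⟩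
  · intro h0
    exact ht ⟨m, (eq_neg_of_add_eq_zero_left h0).symm⟩
  · have h1 : a ^ (m + 1) * a ^ (-(m + 1)) = 1 := by
      rw [← zpow_add₀ ha]; simp
    have h2 : a ^ (m + 1) = a * a ^ m := by rw [zpow_add_one₀ ha]; ring
    simp only [hS m]
    linear_combination h m * h1 + (t + S m) * h2

/-- A nowhere-vanishing column extends to a nowhere-vanishing solution of `L_α`. -/
theorem LinSol.exists_ne_zero_extending {α : ℂ} (hα : α ≠ 0) (n₀ : ℤ) (c : ℤ → ℂ)
    (hc : ∀ m, c m ≠ 0) :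
    ∃ w : ℤ → ℤ → ℂ, LinSol α w ∧ (∀ n m, w n m ≠ 0) ∧ w n₀ = c := by
  obtain ⟨s, hs0, hs⟩ := exists_int_seq_of_step (A := {f : ℤ → ℂ // ∀ m, f m ≠ 0})
    (fun n f g => ∀ m, g.1 (m + 1) + f.1 (m + 1) = α ^ n * (g.1 m - f.1 m))
    (fun n f => by
      obtain ⟨g, hg, hr⟩ := exists_linear_recurrence_ne_zero (α ^ n) (zpow_ne_zero _ hα)
        (fun m => -(f.1 (m + 1) + α ^ n * f.1 m))
      exact ⟨⟨g, hg⟩, fun m => by linear_combination hr m⟩)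
    (fun n f => by
      obtain ⟨g, hg, hr⟩ := exists_linear_recurrence_ne_zero (-α ^ n)
        (neg_ne_zero.2 (zpow_ne_zero _ hα)) (fun m => -f.1 (m + 1) + α ^ n * f.1 m)
      exact ⟨⟨g, hg⟩, fun m => by linear_combination hr m⟩) n₀ ⟨c, hc⟩
  exact ⟨fun n => (s n).1, hs, fun n => (s n).2, by simp [hs0]⟩

theorem LinSol.add_smul {α : ℂ} {w u : ℤ → ℤ → ℂ} (hw : LinSol α w) (hu : LinSol α u) (s : ℂ) :
    LinSol α fun n m => w n m + s * u n m :=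
  fun n m => by linear_combination hw n m + s * hu n m

/-- If `α ^ N = -1` with `N` minimal, then no smaller positive power of `α` equals `1`. -/
theorem pow_ne_one_of_minimal_pow_eq_neg_one {N : ℕ} {α : ℂ} (hαN : α ^ N = -1)
    (hmin : ∀ j : ℕ, 1 ≤ j → j < N → α ^ j ≠ -1) {j : ℕ} (hj : 1 ≤ j) (hjN : j < N) :
    α ^ j ≠ 1 := by
  intro h
  refine hmin (N - j) (by omega) (by omega) ?_
  rw [← hαN, ← Nat.sub_add_cancel hjN.le, pow_add, h]
  simp

/-- The coefficients of the exponential solutions of `L_α` that are supported on `N` columns. -/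
noncomputable def localizedCoeff (α : ℂ) (N : ℕ) (k : ℤ) : ℂ :=
  if 1 ≤ k ∧ k ≤ N then ∏ p ∈ Finset.Ico 1 k.toNat, (α ^ p + 1) / (α ^ p - 1) else 0

/-- The exponential solution of `L_α` supported on the columns `j + 1, …, j + N`. -/
noncomputable def localizedSol (α : ℂ) (N : ℕ) (j n m : ℤ) : ℂ :=
  α ^ (j * m) * localizedCoeff α N (n - j)

theorem localizedCoeff_ne_zero {N : ℕ} {α : ℂ} (hαN : α ^ N = -1)
    (hmin : ∀ j : ℕ, 1 ≤ j → j < N → α ^ j ≠ -1) {k : ℤ} (hk : 1 ≤ k) (hkN : k ≤ N) :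
    localizedCoeff α N k ≠ 0 := by
  rw [localizedCoeff, if_pos ⟨hk, hkN⟩]
  refine Finset.prod_ne_zero_iff.2 fun p hp => ?_
  rw [Finset.mem_Ico] at hp
  refine div_ne_zero (fun h => hmin p hp.1 (by omega) (eq_neg_of_add_eq_zero_left h)) ?_
  exact sub_ne_zero.2 (pow_ne_one_of_minimal_pow_eq_neg_one hαN hmin hp.1 (by omega))

theorem localizedCoeff_step {N : ℕ} {α : ℂ} (hαN : α ^ N = -1)
    (hmin : ∀ j : ℕ, 1 ≤ j → j < N → α ^ j ≠ -1) (k : ℤ) :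
    localizedCoeff α N (k + 1) * (α ^ k - 1) = localizedCoeff α N k * (α ^ k + 1) := by
  rcases lt_or_ge k 0 with h | h
  · simp [localizedCoeff, show ¬ (1 ≤ k) by omega, show ¬ (0 ≤ k) by omega]
  obtain ⟨k, rfl⟩ := Int.eq_ofNat_of_zero_le h
  rcases Nat.eq_zero_or_pos k with rfl | hk
  · simp [localizedCoeff]
  rcases lt_trichotomy k N with hkN | rfl | hkN
  · have h1 := sub_ne_zero.2 (pow_ne_one_of_minimal_pow_eq_neg_one hαN hmin hk hkN)
    rw [localizedCoeff, localizedCoeff, if_pos (by omega), if_pos (by omega),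
      show ((k : ℤ) + 1).toNat = k + 1 by omega, Int.toNat_natCast,
      Finset.prod_Ico_succ_top hk, zpow_natCast]
    field_simp
  · simp [localizedCoeff, hαN]
  · simp [localizedCoeff, show ¬ ((k : ℤ) + 1 ≤ N) by omega, show ¬ (k ≤ N) by omega]

theorem linSol_localizedSol {N : ℕ} {α : ℂ} (hα : α ≠ 0) (hαN : α ^ N = -1)
    (hmin : ∀ j : ℕ, 1 ≤ j → j < N → α ^ j ≠ -1) (j : ℤ) :
    LinSol α (localizedSol α N j) := by
  intro n m
  have h := localizedCoeff_step hαN hmin (n - j)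
  have h1 : α ^ (j * (m + 1)) = α ^ (j * m) * α ^ j := by rw [← zpow_add₀ hα]; ring_nf
  have h2 : α ^ n = α ^ j * α ^ (n - j) := by rw [← zpow_add₀ hα]; ring_nf
  simp only [localizedSol, h1, h2, show n + 1 - j = n - j + 1 by ring]
  linear_combination (-(α ^ (j * m) * α ^ j)) * h

theorem IsFirstIntegralM.sub_nat {E : (ℤ → ℤ → ℂ) → Prop} {l : ℕ}
    {W : ℤ → ℤ → (Fin (l + 1) → ℂ) → ℂ} (hW : IsFirstIntegralM E l W) {w : ℤ → ℤ → ℂ}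
    (hw : E w) (hw0 : ∀ n m, w n m ≠ 0) (n m : ℤ) (k : ℕ) :
    W n m (fun i => w n (m + ((i : ℕ) : ℤ)))
      = W (n - k) m (fun i => w (n - k) (m + ((i : ℕ) : ℤ))) := by
  induction k with
  | zero => simp
  | succ k ih =>
    have h := hW.2.1 w hw hw0 (n - (k + 1 : ℕ)) m
    rw [show n - ((k + 1 : ℕ) : ℤ) + 1 = n - k by push_cast; ring] at h
    rw [ih, h]

/-- A function differentiable at `x` that is constant along a dense set of parameters in the
direction `e` has vanishing derivative in that direction. -/
theorem fderiv_apply_eq_zero_of_dense {E : Type*} [NormedAddCommGroup E] [NormedSpace ℂ E]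
    {f : E → ℂ} {x e : E} (hf : DifferentiableAt ℂ f x) {S : Set ℂ} (hS : Dense S)
    (h : ∀ s ∈ S, f (x + s • e) = f x) : fderiv ℂ f x e = 0 := by
  have h1 : HasDerivAt (fun s : ℂ => f (x + s • e)) (fderiv ℂ f x e) 0 :=
    hf.hasFDerivAt.hasLineDerivAt e
  have h2 : HasDerivWithinAt (fun s : ℂ => f (x + s • e)) 0 S 0 :=
    (hasDerivWithinAt_const (0 : ℂ) S (f x)).congr h (by simp)
  have hu : UniqueDiffWithinAt ℂ S 0 := by
    rw [← uniqueDiffWithinAt_closure, hS.closure_eq]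
    exact uniqueDiffWithinAt_univ
  exact hu.eq_deriv _ h1.hasDerivWithinAt h2

/-- The differential of an `m`-direction first integral of `L_α` vanishes along every solution
that is zero on some earlier column. -/
theorem IsFirstIntegralM.fderiv_apply_eq_zero {α : ℂ} (hα : α ≠ 0) {l : ℕ}
    {W : ℤ → ℤ → (Fin (l + 1) → ℂ) → ℂ} (hW : IsFirstIntegralM (LinSol α) l W)
    {u : ℤ → ℤ → ℂ} (hu : LinSol α u) (n m : ℤ) (k : ℕ) (hu0 : ∀ m, u (n - k) m = 0)
    {x : Fin (l + 1) → ℂ} (hx : ∀ i, x i ≠ 0) :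
    fderiv ℂ (W n m) x (fun i => u n (m + ((i : ℕ) : ℤ))) = 0 := by
  let c : ℤ → ℂ := fun r =>
    if h : (r - m).toNat < l + 1 then x ⟨(r - m).toNat, h⟩ else 1
  have hc : ∀ r, c r ≠ 0 := fun r => by
    simp only [c]
    split_ifs
    exacts [hx _, one_ne_zero]
  obtain ⟨w, hw, hw0, hwc⟩ := LinSol.exists_ne_zero_extending hα n c hc
  have hwx : (fun i : Fin (l + 1) => w n (m + ((i : ℕ) : ℤ))) = x := by
    funext i
    simp only [hwc, c, add_sub_cancel_left, Int.toNat_natCast, i.isLt, dite_true, Fin.eta]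
  have hdense : Dense (Set.range fun p : ℤ × ℤ => -w p.1 p.2 / u p.1 p.2)ᶜ :=
    (Set.countable_range _).dense_compl ℝ
  refine fderiv_apply_eq_zero_of_dense (hW.1 n m x hx) hdense fun s hs => ?_
  have hne : ∀ a b, w a b + s * u a b ≠ 0 := fun a b h0 => by
    by_cases hab : u a b = 0
    · exact hw0 a b (by simpa [hab] using h0)
    · refine hs ⟨(a, b), ?_⟩
      simp only
      rw [div_eq_iff hab]
      linear_combination -h0
  have h1 := hW.sub_nat (hw.add_smul hu s) hne n m k
  have h2 := hW.sub_nat hw hw0 n m k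
  simp only [hu0, mul_zero, add_zero] at h1
  rw [← h2, hwx] at h1
  rw [← h1, ← hwx]
  rfl

/-- If `α^N = −1` with `N` minimal, then any `m`-direction first integral of `L_α`
has order at least `N`. -/
theorem order_lower_bound_m_direction_linear (N : ℕ) (hN : 1 ≤ N) (α : ℂ)
    (hαN : α ^ N = -1) (hmin : ∀ j : ℕ, 1 ≤ j → j < N → α ^ j ≠ -1)
    (lhat : ℕ) (hl : 1 ≤ lhat)
    (W : ℤ → ℤ → (Fin (lhat + 1) → ℂ) → ℂ)
    (hW : IsFirstIntegralM (LinSol α) lhat W) :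
    N ≤ lhat := by
  by_contra! hlt
  have hα : α ≠ 0 := by
    rintro rfl
    simp [zero_pow (show N ≠ 0 by omega)] at hαN
  obtain ⟨n, m, x, hx, hd⟩ := hW.2.2.1
  set L := fderiv ℂ (W n m) x
  let v : Fin (lhat + 1) → ℂ := fun k => α ^ (n - 1 - ((k : ℕ) : ℤ))
  have hv : Function.Injective v := by
    have key : ∀ a b : Fin (lhat + 1), a < b → v a ≠ v b := fun a b hab h => by
      have hab' : (a : ℕ) < b := hab
      refine pow_ne_one_of_minimal_pow_eq_neg_one hαN hmin
        (show 1 ≤ (b : ℕ) - a by omega) (by omega) ?_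
      rw [← zpow_natCast, show (((b : ℕ) - (a : ℕ) : ℕ) : ℤ)
        = (n - 1 - ((a : ℕ) : ℤ)) - (n - 1 - ((b : ℕ) : ℤ)) by omega, zpow_sub₀ hα]
      exact (div_eq_one_iff_eq (zpow_ne_zero _ hα)).2 h
    intro a b h
    rcases lt_trichotomy a b with hab | hab | hab
    exacts [absurd h (key a b hab), hab, absurd h.symm (key b a hab)]
  have hLv : ∀ k, L (fun i => v k ^ (i : ℕ)) = 0 := fun k => by
    have hk := k.isLt
    set j : ℤ := n - 1 - ((k : ℕ) : ℤ) with hj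
    have h0 : ∀ r, localizedSol α N j (n - N) r = 0 := fun r => by
      simp [localizedSol, localizedCoeff, show ¬ (1 ≤ n - N - j) by omega]
    have h := hW.fderiv_apply_eq_zero hα (linSol_localizedSol hα hαN hmin j) n m N h0 hx
    have hC : localizedCoeff α N (n - j) ≠ 0 :=
      localizedCoeff_ne_zero hαN hmin (by omega) (by omega)
    have he : (fun i : Fin (lhat + 1) => localizedSol α N j n (m + ((i : ℕ) : ℤ)))
        = (α ^ (j * m) * localizedCoeff α N (n - j)) • fun i : Fin (lhat + 1) => v k ^ (i : ℕ) := by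
      funext i
      simp only [localizedSol, Pi.smul_apply, smul_eq_mul, v, ← hj]
      rw [mul_add, zpow_add₀ hα, zpow_mul α j (i : ℕ), zpow_natCast]
      ring
    rw [he, map_smul, smul_eq_mul] at h
    exact (mul_eq_zero.1 h).resolve_left (mul_ne_zero (zpow_ne_zero _ hα) hC)
  have hz : (fun i => L (Pi.single i 1)) = 0 := by
    refine Matrix.eq_zero_of_mulVec_eq_zero (Matrix.det_vandermonde_ne_zero_iff.2 hv) ?_
    funext k
    have h := hLv k
    rw [pi_eq_sum_univ' (fun i : Fin (lhat + 1) => v k ^ (i : ℕ)), map_sum] at h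
    simpa [Matrix.mulVec, dotProduct, Matrix.vandermonde_apply, Pi.single_apply] using h
  exact hd (congrFun hz 0)
end

section
/- Let N ≥ 1 and let α ∈ ℂ satisfy α^N = −1. Let v be a solution of the linear equation L_α, and define the first-direction Laplace transforms by v_0 = v and v_j(n,m) = v_{j−1}(n+1,m) + α^{j−1}·v_{j−1}(n,m) for j ≥ 1. Then the function Ŵ₁(n,m) := (−1)^m·α^{−n·m}·(v_N(n+1,m) − v_N(n,m)) satisfies Ŵ₁(n,m+1) = Ŵ₁(n,m) for all n,m ∈ ℤ; that is, Ŵ₁ = (−1)^m·α^{−nm}·(T₁ − 1)(T₁ + α^{N−1})(T₁ + α^{N−2})⋯(T₁ + 1)v is a first integral of L_α in the n-direction. -/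
/-- On solutions of `L_α`, the `m`-shift of `v_{j+1}` is `α^{n+j}` times the `n`-difference
of `v_j`. -/
theorem LinSol.lap1_succ_shift {α : ℂ} {v : ℤ → ℤ → ℂ} (hα : α ≠ 0) (hv : LinSol α v)
    (j : ℕ) (n m : ℤ) :
    lap1 α v (j + 1) n (m + 1) = α ^ n * α ^ j * (lap1 α v j (n + 1) m - lap1 α v j n m) := by
  induction j generalizing n with
  | zero => simpa [lap1] using hv n m
  | succ j ih =>
    rw [lap1]
    beta_reduce
    rw [ih, ih, zpow_add_one₀ hα]
    simp only [lap1]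
    ring

/-- `Ŵ₁(n,m) = (−1)^m·α^{−n·m}·(v_N(n+1,m) − v_N(n,m))` is a first integral of `L_α`
in the `n`-direction when `α^N = −1`. -/
theorem explicit_first_integral_n_direction (N : ℕ) (hN : 1 ≤ N) (α : ℂ)
    (hαN : α ^ N = -1) (v : ℤ → ℤ → ℂ) (hv : LinSol α v) :
    ∀ n m : ℤ,
      (-1 : ℂ) ^ (m + 1) * α ^ (-(n * (m + 1)))
          * (lap1 α v N (n + 1) (m + 1) - lap1 α v N n (m + 1))
        = (-1 : ℂ) ^ m * α ^ (-(n * m)) * (lap1 α v N (n + 1) m - lap1 α v N n m) := by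
  intro n m
  obtain ⟨k, rfl⟩ : ∃ k, N = k + 1 := ⟨N - 1, by omega⟩
  have hα : α ≠ 0 := by
    rintro rfl
    simp at hαN
  have hdiff : lap1 α v (k + 1) (n + 1) (m + 1) - lap1 α v (k + 1) n (m + 1)
      = -α ^ n * (lap1 α v (k + 1) (n + 1) m - lap1 α v (k + 1) n m) := by
    rw [hv.lap1_succ_shift hα, hv.lap1_succ_shift hα, zpow_add_one₀ hα]
    simp only [lap1]
    rw [pow_succ] at hαN
    linear_combination (α ^ n * (lap1 α v k (n + 1 + 1) m - lap1 α v k (n + 1) m)) * hαN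
  have hpow : α ^ (-(n * (m + 1))) * α ^ n = α ^ (-(n * m)) := by
    rw [← zpow_add₀ hα]
    congr 1
    ring
  rw [hdiff, ← hpow, zpow_add_one₀ (by norm_num)]
  ring
end

section
/- Let N ≥ 1 and let α ∈ ℂ satisfy α^N = −1. Let v be a solution of the linear equation L_α, and define the second-direction Laplace transforms by v̌_0 = v and v̌_j(n,m) = v̌_{j−1}(n,m+1) − α^{n−j}·v̌_{j−1}(n,m) for j ≥ 1. Then the function Ŵ₂(n,m) := (−1)^n·(v̌_{N−1}(n,m+1) + α^n·v̌_{N−1}(n,m)) satisfies Ŵ₂(n+1,m) = Ŵ₂(n,m) for all n,m ∈ ℤ; that is, Ŵ₂ = (−1)^n·(T₂ + α^n)(T₂ − α^{n−N+1})(T₂ − α^{n−N+2})⋯(T₂ − α^{n−1})v is a first integral of L_α in the m-direction. -/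
theorem lap2_succ (α : ℂ) (v : ℤ → ℤ → ℂ) (j : ℕ) (n m : ℤ) :
    lap2 α v (j + 1) n m
      = lap2 α v j n (m + 1) - α ^ (n - ((j : ℤ) + 1)) * lap2 α v j n m :=
  rfl

/-- Raising the index of the Laplace transform by one undoes a unit shift in `n`:
`v̌_{j+1}(n+1,m) = −(T₂ + α^n) v̌_j(n,m)`. -/
theorem LinSol.lap2_succ_shift {α : ℂ} {v : ℤ → ℤ → ℂ} (hv : LinSol α v) (j : ℕ) (n m : ℤ) :
    lap2 α v (j + 1) (n + 1) m = -(lap2 α v j n (m + 1) + α ^ n * lap2 α v j n m) := by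
  induction j generalizing m with
  | zero =>
    have h := hv n m
    simp only [lap2, Nat.cast_zero, zero_add, add_sub_cancel_right]
    linear_combination h
  | succ j ih =>
    have e : n + 1 - (((j + 1 : ℕ) : ℤ) + 1) = n - ((j : ℤ) + 1) := by
      push_cast
      ring
    rw [lap2_succ α v (j + 1), ih, ih, e, lap2_succ, lap2_succ]
    ring

/-- `Ŵ₂(n,m) = (−1)^n·(v̌_{N−1}(n,m+1) + α^n·v̌_{N−1}(n,m))` is a first integral of `L_α`
in the `m`-direction when `α^N = −1`. -/
theorem explicit_first_integral_m_direction (N : ℕ) (hN : 1 ≤ N) (α : ℂ)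
    (hαN : α ^ N = -1) (v : ℤ → ℤ → ℂ) (hv : LinSol α v) :
    ∀ n m : ℤ,
      (-1 : ℂ) ^ (n + 1)
          * (lap2 α v (N - 1) (n + 1) (m + 1) + α ^ (n + 1) * lap2 α v (N - 1) (n + 1) m)
        = (-1 : ℂ) ^ n * (lap2 α v (N - 1) n (m + 1) + α ^ n * lap2 α v (N - 1) n m) := by
  intro n m
  obtain ⟨k, rfl⟩ := Nat.exists_eq_add_of_le' hN
  have hα : α ≠ 0 := by
    rintro rfl
    simp at hαN
  have hpow : α ^ (n + 1) = -α ^ (n + 1 - ((k : ℤ) + 1)) := by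
    have e : n + 1 = (n + 1 - ((k : ℤ) + 1)) + ((k + 1 : ℕ) : ℤ) := by
      push_cast
      ring
    conv_lhs => rw [e, zpow_add₀ hα, zpow_natCast, hαN]
    ring
  have h := hv.lap2_succ_shift k n m
  rw [lap2_succ] at h
  rw [Nat.add_sub_cancel, zpow_add_one₀ (by norm_num : (-1 : ℂ) ≠ 0), hpow]
  linear_combination -(-1 : ℂ) ^ n * h
end

section
/- Let u be a solution of the discrete Burgers-type equation B_{−1} such that for all n,m ∈ ℤ: u(n,m) ≠ 0, u(n,m) ≠ 1, u(n,m) ≠ −1, and u(n+1,m)·u(n,m) ≠ 1. Then the function W₁(n,m) := (−1)^m · u(n,m)·(u(n+2,m)·u(n+1,m) − 1) / (u(n+1,m)·u(n,m) − 1) satisfies W₁(n,m+1) = W₁(n,m) for all n,m ∈ ℤ; that is, W₁ is a first integral of B_{−1} in the n-direction. -/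
/-- `u` is a solution of the discrete Burgers-type equation `B_{−1}`:
`(u(n+1,m+1)+1)(u(n,m)−1)u(n,m+1) = −(u(n,m+1)+1)(u(n+1,m)−1)u(n,m)`. -/
def BurSolNegOne (u : ℤ → ℤ → ℂ) : Prop :=
  ∀ n m : ℤ, (u (n + 1) (m + 1) + 1) * (u n m - 1) * u n (m + 1)
    = -((u n (m + 1) + 1) * (u (n + 1) m - 1) * u n m)

/-- A solution satisfies
`(u(n,m)−1)(u(n+1,m+1)u(n,m+1) − 1) = −(u(n,m+1)+1)(u(n+1,m)u(n,m) − 1)`. -/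
theorem BurSolNegOne.sub_one_mul_eq {u : ℤ → ℤ → ℂ} (hu : BurSolNegOne u) (n m : ℤ) :
    (u n m - 1) * (u (n + 1) (m + 1) * u n (m + 1) - 1)
      = -((u n (m + 1) + 1) * (u (n + 1) m * u n m - 1)) := by
  linear_combination hu n m

/-- `W₁(n,m) = (−1)^m·u(n,m)(u(n+2,m)u(n+1,m) − 1)/(u(n+1,m)u(n,m) − 1)` is a first
integral of `B_{−1}` in the `n`-direction. -/
theorem explicit_burgers_first_integral_n (u : ℤ → ℤ → ℂ) (hu : BurSolNegOne u)
    (h0 : ∀ n m : ℤ, u n m ≠ 0) (h1 : ∀ n m : ℤ, u n m ≠ 1)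
    (h2 : ∀ n m : ℤ, u n m ≠ -1) (h3 : ∀ n m : ℤ, u (n + 1) m * u n m ≠ 1) :
    ∀ n m : ℤ,
      (-1 : ℂ) ^ (m + 1) * u n (m + 1) * (u (n + 2) (m + 1) * u (n + 1) (m + 1) - 1)
          / (u (n + 1) (m + 1) * u n (m + 1) - 1)
        = (-1 : ℂ) ^ m * u n m * (u (n + 2) m * u (n + 1) m - 1)
          / (u (n + 1) m * u n m - 1) := by
  intro n m
  have burgers := hu n m
  have shift₀ := hu.sub_one_mul_eq n m
  have shift₁ := hu.sub_one_mul_eq (n + 1) m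
  rw [show n + 1 + 1 = n + 2 by ring] at shift₁
  have hb : u (n + 1) m - 1 ≠ 0 := sub_ne_zero.mpr (h1 _ _)
  have hA : u n (m + 1) + 1 ≠ 0 := fun h => h2 _ _ (eq_neg_of_add_eq_zero_left h)
  rw [div_eq_div_iff (sub_ne_zero.mpr (h3 _ _)) (sub_ne_zero.mpr (h3 _ _)),
    zpow_add_one₀ (by norm_num)]
  refine mul_left_cancel₀ (mul_ne_zero hb hA) ?_
  linear_combination (-1 : ℂ) ^ m *
    (-(u n (m + 1) * (u (n + 1) m * u n m - 1) * (u n (m + 1) + 1)) * shift₁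
      + u n (m + 1) * (u (n + 1) (m + 1) + 1) * (u (n + 2) m * u (n + 1) m - 1) * shift₀
      - (u (n + 2) m * u (n + 1) m - 1) * (u (n + 1) (m + 1) * u n (m + 1) - 1) * burgers)
end

section
/- Let u be a solution of the discrete Burgers-type equation B_{−1} such that for all n,m ∈ ℤ: u(n,m) ≠ 0, u(n,m) ≠ 1, u(n,m) ≠ −1, and u(n,m) + u(n,m+1) ≠ 0. Then the function W₂(n,m) := (−1)^n · (u(n,m+1) + u(n,m+2))·(u(n,m) − 1) / ((u(n,m) + u(n,m+1))·(u(n,m+2) + 1)) satisfies W₂(n+1,m) = W₂(n,m) for all n,m ∈ ℤ; that is, W₂ is a first integral of B_{−1} in the m-direction. -/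
/-- The polynomial identity behind the first integral, for two adjacent rows `a, b, c` and
`A, B, C` of values of a solution of `B_{−1}`. -/
lemma burgers_cross_identity {a b c A B C : ℂ} (ha : a ≠ 0) (hc : c ≠ 0)
    (hb : b + 1 ≠ 0) (hb' : b - 1 ≠ 0)
    (hab : (B + 1) * (a - 1) * b = -((b + 1) * (A - 1) * a))
    (hbc : (C + 1) * (b - 1) * c = -((c + 1) * (B - 1) * b)) :
    -((B + C) * (A - 1)) * ((a + b) * (c + 1))
      = (b + c) * (a - 1) * ((A + B) * (C + 1)) := by
  have hA : (b + 1) * a * (A - 1) = -((B + 1) * (a - 1) * b) := by linear_combination hab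
  have hAB : (b + 1) * a * (A + B) = (B + 1) * (a + b) := by linear_combination hab
  have hBC : (b - 1) * c * (B + C) = -((B - 1) * (b + c)) := by linear_combination hbc
  have hK : (b + 1) * a * ((b - 1) * c) ≠ 0 :=
    mul_ne_zero (mul_ne_zero hb ha) (mul_ne_zero hb' hc)
  apply mul_left_cancel₀ hK
  linear_combination
    (-(a + b) * (c + 1) * ((b - 1) * c * (B + C))) * hA
      + (a + b) * (c + 1) * ((B + 1) * (a - 1) * b) * hBC
      - (b + c) * (a - 1) * ((b - 1) * c * (C + 1)) * hAB
      - (b + c) * (a - 1) * ((B + 1) * (a + b)) * hbc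

/-- `W₂(n,m) = (−1)^n·(u(n,m+1)+u(n,m+2))(u(n,m)−1)/((u(n,m)+u(n,m+1))(u(n,m+2)+1))`
is a first integral of `B_{−1}` in the `m`-direction. -/
theorem explicit_burgers_first_integral_m (u : ℤ → ℤ → ℂ) (hu : BurSolNegOne u)
    (h0 : ∀ n m : ℤ, u n m ≠ 0) (h1 : ∀ n m : ℤ, u n m ≠ 1)
    (h2 : ∀ n m : ℤ, u n m ≠ -1) (h3 : ∀ n m : ℤ, u n m + u n (m + 1) ≠ 0) :
    ∀ n m : ℤ,
      (-1 : ℂ) ^ (n + 1) * ((u (n + 1) (m + 1) + u (n + 1) (m + 2)) * (u (n + 1) m - 1))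
          / ((u (n + 1) m + u (n + 1) (m + 1)) * (u (n + 1) (m + 2) + 1))
        = (-1 : ℂ) ^ n * ((u n (m + 1) + u n (m + 2)) * (u n m - 1))
          / ((u n m + u n (m + 1)) * (u n (m + 2) + 1)) := by
  intro n m
  have hbc := hu n (m + 1)
  rw [show m + 1 + 1 = m + 2 by ring] at hbc
  have add_one_ne (k l : ℤ) : u k l + 1 ≠ 0 := fun h => h2 k l (eq_neg_of_add_eq_zero_left h)
  have key := burgers_cross_identity (h0 n m) (h0 n (m + 2)) (add_one_ne n (m + 1))
    (sub_ne_zero.2 (h1 n (m + 1))) (hu n m) hbc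
  rw [div_eq_div_iff (mul_ne_zero (h3 _ _) (add_one_ne _ _)) (mul_ne_zero (h3 n m) (add_one_ne _ _)),
    zpow_add_one₀ (by norm_num)]
  linear_combination (-1 : ℂ) ^ n * key
end

section
/- Let v be a solution of the linear equation L_{−1}, i.e. v(n+1,m+1) + v(n,m+1) = (−1)^n·(v(n+1,m) − v(n,m)) for all n,m ∈ ℤ. Then for all n,m ∈ ℤ: (a) the function Ŵ₁(n,m) := (−1)^{(1−n)·m}·(v(n+2,m) − v(n,m)) satisfies Ŵ₁(n,m+1) = Ŵ₁(n,m), and (b) the function Ŵ₂(n,m) := (−1)^n·v(n,m+1) + v(n,m) satisfies Ŵ₂(n+1,m) = Ŵ₂(n,m); that is, Ŵ₁ and Ŵ₂ are first integrals of L_{−1} of orders 2 and 1 in the n- and m-directions respectively. -/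
/-- `v` is a solution of the linear equation `L_{−1}`:
`v(n+1,m+1) + v(n,m+1) = (−1)^n·(v(n+1,m) − v(n,m))` for all integers `n, m`. -/
def LinSolNegOne (v : ℤ → ℤ → ℂ) : Prop :=
  ∀ n m : ℤ, v (n + 1) (m + 1) + v n (m + 1) = (-1 : ℂ) ^ n * (v (n + 1) m - v n m)

/-- For `L_{−1}`, the functions `Ŵ₁(n,m) = (−1)^{(1−n)m}·(v(n+2,m) − v(n,m))` and
`Ŵ₂(n,m) = (−1)^n·v(n,m+1) + v(n,m)` are first integrals in the `n`- and
`m`-directions respectively, of orders `2` and `1`. -/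
theorem explicit_first_integrals_alpha_neg_one (v : ℤ → ℤ → ℂ) (hv : LinSolNegOne v) :
    ∀ n m : ℤ,
      ((-1 : ℂ) ^ ((1 - n) * (m + 1)) * (v (n + 2) (m + 1) - v n (m + 1))
          = (-1 : ℂ) ^ ((1 - n) * m) * (v (n + 2) m - v n m))
      ∧ ((-1 : ℂ) ^ (n + 1) * v (n + 1) (m + 1) + v (n + 1) m
          = (-1 : ℂ) ^ n * v n (m + 1) + v n m) := by
  intro n m
  have h0 := hv n m
  have h1 := hv (n + 1) m
  have hne : (-1 : ℂ) ≠ 0 := by norm_num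
  have hsucc : (-1 : ℂ) ^ (n + 1) = -(-1 : ℂ) ^ n := by
    rw [zpow_add_one₀ hne, mul_neg_one]
  have hsq : (-1 : ℂ) ^ n * (-1 : ℂ) ^ n = 1 := by
    rw [← mul_zpow]; simp
  have hsub : (-1 : ℂ) ^ (1 - n) = -(-1 : ℂ) ^ n := by
    rw [zpow_sub₀ hne, zpow_one, neg_div, one_div, inv_eq_of_mul_eq_one_left hsq]
  rw [hsucc, show n + 1 + 1 = n + 2 by ring] at h1
  rw [mul_add, mul_one, zpow_add₀ hne, hsub, hsucc]
  constructor
  · linear_combination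
      (-1 : ℂ) ^ ((1 - n) * m) * (-(-1 : ℂ) ^ n * (h1 - h0) + (v (n + 2) m - v n m) * hsq)
  · linear_combination -(-1 : ℂ) ^ n * h0 - (v (n + 1) m - v n m) * hsq
end
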